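/- arXiv:1010.4753 — 4 statements merged into one kernel-verified Lean document; each statement's English description precedes it below -/
import Mathlib

section
/- Let F_2 be the free group on generators a, b and let A be the subgroup generated by a. Then the group Out(F_2; A) of outer automorphisms represented by automorphisms whose restriction to A is conjugation by an element of F_2 is isomorphic to the infinite dihedral group (equivalently, to the semidirect product of ℤ by ℤ/2 with the inversion action). -/
/-- The subgroup of inner automorphisms of a group. -/
def innAut (G : Type*) [Group G] : Subgroup (MulAut G) :=
  (MulAut.conj : G →* MulAut G).range

instance innAut_normal (G : Type*) [Group G] : (innAut G).Normal := by
  constructor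
  intro f hf h
  obtain ⟨g, rfl⟩ := hf
  refine ⟨h g, ?_⟩
  ext x
  simp [MulAut.conj_apply, map_mul, map_inv, mul_assoc]

/-- The group of automorphisms of `G` whose restriction to each subgroup `A i`
is conjugation by some element of `G`. -/
def relAut {G : Type*} [Group G] {ι : Type*} (A : ι → Subgroup G) : Subgroup (MulAut G) where
  carrier := {f | ∀ i, ∃ g : G, ∀ x ∈ A i, f x = g * x * g⁻¹}
  one_mem' := fun i => ⟨1, by simp⟩
  mul_mem' := by
    intro f₁ f₂ h₁ h₂ i
    obtain ⟨g₂, hg₂⟩ := h₂ i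
    obtain ⟨g₁, hg₁⟩ := h₁ i
    refine ⟨f₁ g₂ * g₁, fun x hx => ?_⟩
    have : (f₁ * f₂) x = f₁ (f₂ x) := rfl
    rw [this, hg₂ x hx, map_mul, map_mul, map_inv, hg₁ x hx]
    group
  inv_mem' := by
    intro f hf i
    obtain ⟨g, hg⟩ := hf i
    refine ⟨(f⁻¹ g)⁻¹, fun x hx => ?_⟩
    apply f.injective
    have h1 : f (f⁻¹ x) = x := f.apply_symm_apply x
    simp only [map_mul, map_inv]
    rw [show f (f⁻¹ x) = x from f.apply_symm_apply x,
        show f (f⁻¹ g) = g from f.apply_symm_apply g, hg x hx]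
    group


namespace OutRel

open FreeGroup List

/-- words beginning and ending with a letter of index `i` -/
def Good {α : Type*} (i : α) (L : List (α × Bool)) : Prop :=
  L ≠ [] ∧ (∀ x ∈ L.head?, x.1 = i) ∧ (∀ x ∈ L.getLast?, x.1 = i)

lemma head_pow {α : Type*} [DecidableEq α] (u : FreeGroup α) (n : ℕ) :
    (u ^ (n + 1)).toWord.head? = u.toWord.head? := by
  rw [toWord_pow, reduceCyclically.reduce_flatten_replicate_succ isReduced_toWord]
  conv_rhs => rw [← reduceCyclically.conj_conjugator_reduceCyclically u.toWord]
  simp only [List.head?_append]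
  rw [List.head?_flatten_replicate (h := by simp)]

lemma last_pow {α : Type*} [DecidableEq α] (u : FreeGroup α) (n : ℕ) :
    (u ^ (n + 1)).toWord.getLast? = u.toWord.getLast? := by
  rw [toWord_pow, reduceCyclically.reduce_flatten_replicate_succ isReduced_toWord]
  conv_rhs => rw [← reduceCyclically.conj_conjugator_reduceCyclically u.toWord]
  simp only [List.getLast?_append]
  rw [List.getLast?_flatten_replicate (h := by simp)]

lemma good_inv {α : Type*} [DecidableEq α] {i : α} {u : FreeGroup α} (h : Good i u.toWord) :
    Good i (u⁻¹).toWord := by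
  obtain ⟨h0, h1, h2⟩ := h
  rw [toWord_inv]
  refine ⟨by simpa [invRev] using h0, ?_, ?_⟩
  · intro x hx
    simp only [invRev, List.head?_reverse, List.getLast?_map, Option.mem_def,
      Option.map_eq_some_iff] at hx
    obtain ⟨y, hy, rfl⟩ := hx
    exact h2 y hy
  · intro x hx
    simp only [invRev, List.getLast?_reverse, List.head?_map, Option.mem_def,
      Option.map_eq_some_iff] at hx
    obtain ⟨y, hy, rfl⟩ := hx
    exact h1 y hy

lemma good_pow {α : Type*} [DecidableEq α] {i : α} {u : FreeGroup α} (h : Good i u.toWord)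
    (n : ℕ) : Good i (u ^ (n + 1)).toWord := by
  obtain ⟨h0, h1, h2⟩ := h
  refine ⟨?_, by rwa [head_pow], by rwa [last_pow]⟩
  rw [Ne, ← List.head?_eq_none_iff, head_pow, List.head?_eq_none_iff]
  exact h0

lemma good_zpow {α : Type*} [DecidableEq α] {i : α} {u : FreeGroup α} (h : Good i u.toWord)
    {k : ℤ} (hk : k ≠ 0) : Good i (u ^ k).toWord := by
  obtain ⟨n, rfl | rfl⟩ := k.eq_nat_or_neg
  · obtain ⟨m, rfl⟩ := Nat.exists_eq_succ_of_ne_zero (n := n) (by rintro rfl; simp at hk)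
    rw [zpow_natCast]; exact good_pow h m
  · obtain ⟨m, rfl⟩ := Nat.exists_eq_succ_of_ne_zero (n := n) (by rintro rfl; simp at hk)
    rw [zpow_neg, zpow_natCast]; exact good_inv (good_pow h m)

abbrev F := FreeGroup (Fin 2)
abbrev a : F := FreeGroup.of 0
abbrev b : F := FreeGroup.of 1

lemma good_a : Good 0 (toWord a) := by simp [Good]

abbrev gen (u : F) : Fin 2 → F := ![a, u]

/-- The map from the free product `⟨a⟩ * ⟨u⟩`. -/
noncomputable def psi (u : F) : Monoid.CoprodI (fun _ : Fin 2 => Multiplicative ℤ) →* F :=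
  Monoid.CoprodI.lift fun i => zpowersHom F (gen u i)

lemma mk_flatten (Ls : List (List (Fin 2 × Bool))) :
    FreeGroup.mk Ls.flatten = (Ls.map FreeGroup.mk).prod := by
  induction Ls with
  | nil => rfl
  | cons x xs ih => simp [← FreeGroup.mul_mk, ih]

lemma key (u : F) (hu : Good 1 u.toWord) (h : Subgroup.closure {a, u} = ⊤) :
    ∃ k : ℤ, u ^ k = b := by
  have hs : (psi u).range = ⊤ := by
    rw [eq_top_iff, ← h, Subgroup.closure_le]
    rintro x (rfl | rfl)
    · exact ⟨Monoid.CoprodI.of (i := 0) (Multiplicative.ofAdd 1), by simp [psi]⟩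
    · exact ⟨Monoid.CoprodI.of (i := 1) (Multiplicative.ofAdd 1), by simp [psi]⟩
  obtain ⟨x, hx⟩ : b ∈ (psi u).range := by rw [hs]; trivial
  obtain ⟨W, rfl⟩ := Monoid.CoprodI.Word.equiv.symm.surjective x
  change psi u W.prod = b at hx
  have hg : ∀ i, Good i (gen u i).toWord := by
    intro i
    fin_cases i
    · exact good_a
    · exact hu
  let pc : (Σ _ : Fin 2, Multiplicative ℤ) → List (Fin 2 × Bool) :=
    fun p => (gen u p.1 ^ (p.2.toAdd)).toWord
  have hpc : ∀ p ∈ W.toList, Good p.1 (pc p) := by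
    intro p hp
    exact good_zpow (hg _) (fun h0 => W.ne_one p hp h0)
  have hprod : psi u W.prod = FreeGroup.mk (W.toList.map pc).flatten := by
    rw [mk_flatten, Monoid.CoprodI.Word.prod, map_list_prod, List.map_map, List.map_map]
    congr 1
    apply List.map_congr_left
    intro p hp
    simp [psi, pc, FreeGroup.mk_toWord]
  have hred : FreeGroup.IsReduced (W.toList.map pc).flatten := by
    rw [FreeGroup.IsReduced, List.isChain_flatten]
    · refine ⟨?_, ?_⟩
      · intro l hl
        obtain ⟨p, hp, rfl⟩ := List.mem_map.1 hl
        exact isReduced_toWord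
      · rw [List.isChain_map]
        refine List.IsChain.imp_of_mem_imp ?_ W.chain_ne
        intro p q hp hq hpq x hx y hy hxy
        exact absurd (((hpc p hp).2.2 x hx).symm.trans (hxy.trans ((hpc q hq).2.1 y hy))) hpq
    · intro hn
      obtain ⟨p, hp, hp'⟩ := List.mem_map.1 hn
      exact (hpc p hp).1 hp'
  have hw : (W.toList.map pc).flatten = [(1, true)] := by
    rw [← hred.reduce_eq, ← toWord_mk, ← hprod, hx, toWord_of]
  have hW : ∃ p, W.toList = [p] := by
    rcases hL : W.toList with _ | ⟨p, _ | ⟨q, t⟩⟩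
    · simp [hL] at hw
    · exact ⟨p, rfl⟩
    · have h1 := (hpc p (by simp [hL])).1
      have h2 := (hpc q (by simp [hL])).1
      have := congrArg List.length hw
      rw [hL] at this
      simp only [List.map_cons, List.flatten_cons, List.length_append, List.length_cons,
        List.length_nil] at this
      have := List.length_pos_iff.2 h1
      have := List.length_pos_iff.2 h2
      omega
  obtain ⟨⟨i, k⟩, hp⟩ := hW
  have hpc1 := hpc ⟨i, k⟩ (by simp [hp])
  rw [hp] at hw
  simp only [List.map_cons, List.map_nil, List.flatten_cons, List.flatten_nil,
    List.append_nil] at hw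
  rw [hw] at hpc1
  have hi : (1 : Fin 2) = i := hpc1.2.1 (1, true) (by simp)
  subst hi
  refine ⟨k.toAdd, ?_⟩
  apply toWord_injective
  rw [toWord_of]
  exact hw

/-- exponent sums -/
noncomputable def ea : F →* Multiplicative ℤ := FreeGroup.lift ![Multiplicative.ofAdd 1, 1]
noncomputable def eb : F →* Multiplicative ℤ := FreeGroup.lift ![1, Multiplicative.ofAdd 1]

@[simp] lemma ea_a : ea a = Multiplicative.ofAdd 1 := by simp [ea]
@[simp] lemma ea_b : ea b = 1 := by simp [ea]
@[simp] lemma eb_a : eb a = 1 := by simp [eb]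
@[simp] lemma eb_b : eb b = Multiplicative.ofAdd 1 := by simp [eb]

lemma key2 (u : F) (hu : Good 1 u.toWord) (h : Subgroup.closure {a, u} = ⊤) :
    u = b ∨ u = b⁻¹ := by
  obtain ⟨k, hk⟩ := key u hu h
  have h1 := congrArg (fun x => (eb x).toAdd) hk
  simp only [map_zpow, toAdd_zpow, eb_b, toAdd_ofAdd, smul_eq_mul] at h1
  rcases Int.isUnit_iff.1 (IsUnit.of_mul_eq_one _ h1) with rfl | rfl
  · left; simpa using hk
  · right; rw [← hk]; simp

lemma head_step (u : F) (x : Fin 2 × Bool) (hx : x ∈ u.toWord.head?) :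
    (FreeGroup.mk [(x.1, !x.2)] * u).norm < u.norm := by
  obtain ⟨t, ht⟩ : ∃ t, u.toWord = x :: t := by
    rcases hL : u.toWord with _ | ⟨y, t⟩
    · simp [hL] at hx
    · simp [hL] at hx; exact ⟨t, by rw [hx]⟩
  have : FreeGroup.mk [(x.1, !x.2)] * u = FreeGroup.mk t := by
    conv_lhs => rw [← FreeGroup.mk_toWord (x := u), ht]
    have h2 : FreeGroup.mk (x :: t) = FreeGroup.mk [x] * FreeGroup.mk t := by
      rw [FreeGroup.mul_mk]; rfl
    have h3 : FreeGroup.mk [(x.1, !x.2)] = (FreeGroup.mk [x])⁻¹ := by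
      rw [FreeGroup.inv_mk]; rfl
    rw [h2, h3]; group
  rw [this]
  refine lt_of_le_of_lt FreeGroup.norm_mk_le ?_
  simp [FreeGroup.norm, ht]

lemma mk_zero (s : Bool) : ∃ k : ℤ, FreeGroup.mk [((0 : Fin 2), s)] = a ^ k := by
  cases s
  · exact ⟨-1, by rw [zpow_neg_one]; rfl⟩
  · exact ⟨1, by rw [zpow_one]; rfl⟩

lemma strip (w : F) : ∃ (m n : ℤ) (u : F), w = a ^ m * u * a ^ n ∧ (u = 1 ∨ Good 1 u.toWord) := by
  obtain ⟨⟨m, n⟩, -, hmin⟩ := (measure fun p : ℤ × ℤ => (a ^ p.1 * w * a ^ p.2).norm).wf.has_min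
    Set.univ ⟨(0, 0), trivial⟩
  have hmin' : ∀ m' n' : ℤ, (a ^ m * w * a ^ n).norm ≤ (a ^ m' * w * a ^ n').norm := fun m' n' =>
    not_lt.1 (hmin (m', n') trivial)
  refine ⟨-m, -n, a ^ m * w * a ^ n, by group, ?_⟩
  set u := a ^ m * w * a ^ n with hu
  by_cases h1 : u = 1
  · exact Or.inl h1
  right
  refine ⟨by rwa [Ne, toWord_eq_nil_iff], ?_, ?_⟩
  · rintro ⟨i, s⟩ hx
    by_contra hi
    have hi0 : i = 0 := by fin_cases i; rfl; simp at hi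
    subst hi0
    have h2 := head_step u _ hx
    obtain ⟨k, hk⟩ := mk_zero (!s)
    simp only [hk] at h2
    have h3 := hmin' (k + m) n
    have h4 : a ^ (k + m) * w * a ^ n = a ^ k * u := by rw [hu]; group
    rw [h4] at h3
    omega
  · rintro ⟨i, s⟩ hx
    by_contra hi
    have hi0 : i = 0 := by fin_cases i; rfl; simp at hi
    subst hi0
    have h2 := head_step u⁻¹ (0, !s) (by
      rw [toWord_inv, invRev, List.head?_reverse, List.getLast?_map]
      rw [Option.mem_def] at hx
      rw [hx]; rfl)
    obtain ⟨k, hk⟩ := mk_zero (!(!s))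
    simp only [hk] at h2
    have h3 := hmin' m (n - k)
    have h4 : a ^ m * w * a ^ (n - k) = (a ^ k * u⁻¹)⁻¹ := by rw [hu]; group
    rw [h4, FreeGroup.norm_inv_eq] at h3
    rw [FreeGroup.norm_inv_eq (x := u)] at h2
    omega

lemma classify (f : MulAut F) (hf : f a = a) :
    ∃ m n : ℤ, f b = a ^ m * b * a ^ n ∨ f b = a ^ m * b⁻¹ * a ^ n := by
  obtain ⟨m, n, u, hw, hu⟩ := strip (f b)
  refine ⟨m, n, ?_⟩
  rcases hu with rfl | hu
  · exfalso
    have h1 : f b = f (a ^ (m + n)) := by rw [hw, map_zpow, hf]; group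
    have h2 := congrArg (fun x => (eb x).toAdd) (f.injective h1)
    simp at h2
  · have hc : Subgroup.closure {a, u} = ⊤ := by
      set K := Subgroup.closure {a, u} with hK
      have ha : a ∈ K := Subgroup.subset_closure (by simp)
      have hu' : u ∈ K := Subgroup.subset_closure (by simp)
      rw [eq_top_iff]
      intro x _
      obtain ⟨y, rfl⟩ := f.surjective x
      have : (⊤ : Subgroup F) ≤ K.comap f.toMonoidHom := by
        rw [← FreeGroup.closure_range_of, Subgroup.closure_le]
        rintro _ ⟨i, rfl⟩
        fin_cases i
        · change f a ∈ K
          rwa [hf]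
        · change f b ∈ K
          rw [hw]
          exact K.mul_mem (K.mul_mem (K.zpow_mem ha _) hu') (K.zpow_mem ha _)
      exact this (Subgroup.mem_top y)
    rcases key2 u hu hc with rfl | rfl
    · exact Or.inl hw
    · exact Or.inr hw

lemma ext_ab {f g : MulAut F} (ha : f a = g a) (hb : f b = g b) : f = g := by
  have : f.toMonoidHom = g.toMonoidHom := by
    apply FreeGroup.ext_hom
    intro i
    fin_cases i
    · exact ha
    · exact hb
  ext x
  exact DFunLike.congr_fun this x

noncomputable def mkAut (u v : F) (h1 : FreeGroup.lift ![a, u] v = b)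
    (h2 : FreeGroup.lift ![a, v] u = b) : MulAut F :=
  MonoidHom.toMulEquiv (FreeGroup.lift ![a, u]) (FreeGroup.lift ![a, v])
    (by
      apply FreeGroup.ext_hom
      intro i
      fin_cases i
      · simp
      · simpa using h2)
    (by
      apply FreeGroup.ext_hom
      intro i
      fin_cases i
      · simp
      · simpa using h1)

lemma mkAut_a (u v : F) (h1 h2) : mkAut u v h1 h2 a = a := by
  change FreeGroup.lift ![a, u] a = a
  simp

lemma mkAut_b (u v : F) (h1 h2) : mkAut u v h1 h2 b = u := by
  change FreeGroup.lift ![a, u] b = u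
  simp

noncomputable def T : MulAut F := mkAut (b * a) (b * a⁻¹) (by simp) (by simp)
noncomputable def S : MulAut F := mkAut b⁻¹ b⁻¹ (by simp) (by simp)

@[simp] lemma T_a : T a = a := mkAut_a _ _ _ _
@[simp] lemma T_b : T b = b * a := mkAut_b _ _ _ _
@[simp] lemma S_a : S a = a := mkAut_a _ _ _ _
@[simp] lemma S_b : S b = b⁻¹ := mkAut_b _ _ _ _

lemma Tz (k : ℤ) : (T ^ k) a = a ∧ (T ^ k) b = b * a ^ k := by
  have hi : T⁻¹ a = a := by
    apply T.injective; rw [T_a]; exact T.apply_symm_apply a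
  have hib : T⁻¹ b = b * a⁻¹ := by
    apply T.injective
    rw [_root_.map_mul, _root_.map_inv, T_a, T_b]
    refine (T.apply_symm_apply b).trans ?_
    group
  induction k using Int.induction_on with
  | zero => simp
  | succ n ih =>
    rw [zpow_add_one, MulAut.mul_apply, MulAut.mul_apply, T_a, T_b, _root_.map_mul, ih.1, ih.2]
    exact ⟨rfl, by group⟩
  | pred n ih =>
    rw [zpow_sub_one, MulAut.mul_apply, MulAut.mul_apply, hi, hib, _root_.map_mul, _root_.map_inv, ih.1, ih.2]
    exact ⟨rfl, by group⟩

lemma dihedral_aux {G : Type*} [Group G] {s t : G} (hs : s * s = 1) (h : s * t * s = t⁻¹)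
    (k : ℤ) : t ^ k * s = s * t ^ (-k) := by
  have hsi : s⁻¹ = s := inv_eq_of_mul_eq_one_left hs
  have h1 : s * t * s⁻¹ = t⁻¹ := by rw [hsi, h]
  have h2 : (s * t * s⁻¹) ^ (-k) = t ^ k := by rw [h1]; simp
  rw [conj_zpow] at h2
  rw [← h2]; group

/-- homomorphism out of the infinite dihedral group -/
def dihedralLift {G : Type*} [Group G] (s t : G) (hs : s * s = 1) (h : s * t * s = t⁻¹) :
    DihedralGroup 0 →* G :=
  MonoidHom.mk' (fun x => match x with
    | .r i => t ^ (show ℤ from i)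
    | .sr i => s * t ^ (show ℤ from i)) (by
    have hk := dihedral_aux hs h
    rintro (i | i) (j | j)
    · exact zpow_add t _ _
    · change s * t ^ (show ℤ from j - i) = t ^ (show ℤ from i) * (s * t ^ (show ℤ from j))
      rw [← mul_assoc, hk, mul_assoc, ← zpow_add]
      congr 2
      exact sub_eq_neg_add (α := ℤ) j i
    · change s * t ^ (show ℤ from i + j) = s * t ^ (show ℤ from i) * t ^ (show ℤ from j)
      rw [mul_assoc, ← zpow_add]
      rfl
    · change t ^ (show ℤ from j - i) = s * t ^ (show ℤ from i) * (s * t ^ (show ℤ from j))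
      rw [mul_assoc, ← mul_assoc (t ^ _), hk, mul_assoc, ← mul_assoc s, hs, one_mul, ← zpow_add]
      congr 1
      exact sub_eq_neg_add (α := ℤ) j i)

abbrev q : MulAut F →* MulAut F ⧸ innAut F := QuotientGroup.mk' (innAut F)

lemma q_conj (g : F) : q (MulAut.conj g) = 1 :=
  (QuotientGroup.eq_one_iff _).2 ⟨g, rfl⟩

lemma SS : S * S = 1 := by
  apply ext_ab <;> simp [MulAut.mul_apply]

lemma STS : S * T * S = MulAut.conj a⁻¹ * T⁻¹ := by
  have h := Tz (-1)
  rw [zpow_neg_one] at h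
  apply ext_ab
  · simp only [MulAut.mul_apply, S_a, T_a, h.1, MulAut.conj_apply]; group
  · rw [MulAut.mul_apply, MulAut.mul_apply, MulAut.mul_apply, MulAut.conj_apply, h.2, S_b,
      _root_.map_inv, T_b, _root_.map_inv, _root_.map_mul, S_b, S_a]
    group

noncomputable def Phi : DihedralGroup 0 →* MulAut F ⧸ innAut F :=
  dihedralLift (q S) (q T) (by rw [← _root_.map_mul, SS, _root_.map_one])
    (by rw [← _root_.map_mul, ← _root_.map_mul, STS, _root_.map_mul, q_conj, one_mul, _root_.map_inv])

lemma Phi_r (i : ℤ) : Phi (DihedralGroup.r (show ZMod 0 from i)) = q (T ^ i) := (map_zpow q T i).symm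
lemma Phi_sr (i : ℤ) : Phi (DihedralGroup.sr (show ZMod 0 from i)) = q (S * T ^ i) := by
  rw [_root_.map_mul, map_zpow]; rfl

lemma Phi_inj : Function.Injective Phi := by
  rw [injective_iff_map_eq_one]
  rintro (i | i) h
  · change ℤ at i
    rw [Phi_r] at h
    obtain ⟨g, hg⟩ := (QuotientGroup.eq_one_iff _).1 h
    have h1 := DFunLike.congr_fun hg b
    rw [(Tz i).2] at h1
    have h2 := congrArg (fun x => (ea x).toAdd) h1
    simp [MulAut.conj_apply] at h2
    subst h2
    rfl
  · change ℤ at i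
    rw [Phi_sr] at h
    obtain ⟨g, hg⟩ := (QuotientGroup.eq_one_iff _).1 h
    have h1 := DFunLike.congr_fun hg b
    rw [MulAut.mul_apply, (Tz i).2] at h1
    have h2 := congrArg (fun x => (eb x).toAdd) h1
    simp [MulAut.conj_apply] at h2

abbrev R : Subgroup (MulAut F) := relAut fun _ : Unit => Subgroup.closure {FreeGroup.of (0 : Fin 2)}

lemma mem_R {f : MulAut F} : f ∈ R ↔ ∃ g, f a = g * a * g⁻¹ := by
  constructor
  · intro h
    obtain ⟨g, hg⟩ := h ()
    exact ⟨g, hg a (Subgroup.subset_closure rfl)⟩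
  · rintro ⟨g, hg⟩ _
    refine ⟨g, fun x hx => ?_⟩
    obtain ⟨k, rfl⟩ := Subgroup.mem_closure_singleton.1 hx
    change f (a ^ k) = g * a ^ k * g⁻¹
    rw [map_zpow, hg, conj_zpow]

lemma Phi_range : Phi.range = Subgroup.map q R := by
  apply le_antisymm
  · rintro _ ⟨i | i, rfl⟩
    · change ℤ at i
      rw [Phi_r]
      exact ⟨_, mem_R.2 ⟨1, by rw [(Tz i).1]; group⟩, rfl⟩
    · change ℤ at i
      rw [Phi_sr]
      exact ⟨_, mem_R.2 ⟨1, by rw [MulAut.mul_apply, (Tz i).1, S_a]; group⟩, rfl⟩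
  · rintro _ ⟨f, hf, rfl⟩
    obtain ⟨g, hg⟩ := mem_R.1 hf
    obtain ⟨f', hf'⟩ : ∃ f', f' = MulAut.conj g⁻¹ * f := ⟨_, rfl⟩
    have hq : q f = q f' := by rw [hf', _root_.map_mul, q_conj, one_mul]
    have ha : f' a = a := by
      rw [hf', MulAut.mul_apply, hg, MulAut.conj_apply]; group
    rw [hq]
    obtain ⟨m, n, hb | hb⟩ := classify f' ha
    · refine ⟨DihedralGroup.r (show ℤ from m + n), ?_⟩
      have : f' = MulAut.conj (a ^ m) * T ^ (m + n) := by
        apply ext_ab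
        · rw [MulAut.mul_apply, (Tz _).1, ha, MulAut.conj_apply]; group
        · rw [MulAut.mul_apply, (Tz _).2, hb, MulAut.conj_apply]; group
      rw [this, _root_.map_mul, q_conj, one_mul]
      exact Phi_r _
    · refine ⟨DihedralGroup.sr (show ℤ from m + n), ?_⟩
      have : f' = MulAut.conj (a ^ m) * (S * T ^ (m + n)) := by
        apply ext_ab
        · rw [MulAut.mul_apply, MulAut.mul_apply, (Tz _).1, ha, S_a, MulAut.conj_apply]; group
        · rw [MulAut.mul_apply, MulAut.mul_apply, (Tz _).2, MulAut.conj_apply, hb, _root_.map_mul,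
            map_zpow S, S_a, S_b]; group
      rw [this, _root_.map_mul, q_conj, one_mul]
      exact Phi_sr _

end OutRel

/-- `Out(F₂; ⟨a⟩)`, the image in `Out(F₂)` of the group of automorphisms whose
restriction to `⟨a⟩` is a conjugation, is isomorphic to the infinite dihedral
group `D_∞ = ℤ ⋊ ℤ/2` (`DihedralGroup 0` in Mathlib). -/
theorem stmt_0 :
    Nonempty
      (↥(Subgroup.map (QuotientGroup.mk' (innAut (FreeGroup (Fin 2))))
          (relAut fun _ : Unit => Subgroup.closure {FreeGroup.of (0 : Fin 2)})) ≃*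
        DihedralGroup 0) := by
  exact ⟨((MonoidHom.ofInjective OutRel.Phi_inj).trans
    (MulEquiv.subgroupCongr OutRel.Phi_range)).symm⟩
end

section
/- Let F_2 be the free group on generators a, b. The map sending a relative outer automorphism [f] ∈ Out(F_2; ⟨a⟩) to the sign ε ∈ {±1} such that f(b) is conjugate to a^N b^ε for some integer N is a well-defined surjective group homomorphism Out(F_2; ⟨a⟩) → ℤ/2 with kernel isomorphic to ℤ. -/
namespace SignMap

abbrev F := FreeGroup (Fin 2)

/-- index of the first letter -/
def hd (g : F) : Option (Fin 2) := g.toWord.head?.map Prod.fst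

/-- index of the last letter -/
def lt (g : F) : Option (Fin 2) := g.toWord.getLast?.map Prod.fst

lemma toWord_mul_of_ne (x y : F) (i j : Fin 2) (hij : i ≠ j) (hx : lt x = some i)
    (hy : hd y = some j) : (x * y).toWord = x.toWord ++ y.toWord := by
  rw [FreeGroup.toWord_mul]
  apply FreeGroup.IsReduced.reduce_eq
  refine List.IsChain.append FreeGroup.isReduced_toWord FreeGroup.isReduced_toWord ?_
  intro p hp q hq hpq
  exfalso
  simp only [Option.mem_def] at hp hq
  simp only [lt, hd, hp, hq, Option.map_some, Option.some.injEq] at hx hy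
  exact hij (hx ▸ hy ▸ hpq)

lemma hd_mul (x y : F) (i j : Fin 2) (hij : i ≠ j) (hx : lt x = some i)
    (hy : hd y = some j) : hd (x * y) = hd x := by
  have := toWord_mul_of_ne x y i j hij hx hy
  unfold hd
  rw [this]
  have : x.toWord ≠ [] := by
    intro h
    simp [lt, h] at hx
  rw [List.head?_append_of_ne_nil _ this]

open FreeGroup FreeGroup.reduceCyclically in
lemma pow_aux (w : F) (i : Fin 2) (h1 : hd w = some i) (h2 : lt w = some i) (n : ℕ) :
    hd (w ^ (n+1)) = some i ∧ lt (w ^ (n+1)) = some i ∧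
      w.toWord.length ≤ (w ^ (n+1)).toWord.length := by
  have key := conj_conjugator_reduceCyclically w.toWord
  have hw : (w ^ (n+1)).toWord = conjugator w.toWord ++
    (List.replicate (n + 1) (reduceCyclically w.toWord)).flatten ++
      invRev (conjugator w.toWord) := by
    rw [toWord_pow, reduce_flatten_replicate_succ isReduced_toWord]
  unfold hd lt at *
  rw [hw]
  generalize conjugator w.toWord = u at *
  generalize reduceCyclically w.toWord = c at *
  rw [← key] at h1 h2 ⊢
  refine ⟨?_, ?_, ?_⟩
  · rcases u with _ | ⟨p, u⟩
    · simp only [List.nil_append, FreeGroup.invRev_empty, List.append_nil] at h1 ⊢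
      rw [List.head?_flatten_replicate (h := by simp)]
      exact h1
    · simpa using h1
  · rcases u with _ | ⟨p, u⟩
    · simp only [List.nil_append, FreeGroup.invRev_empty, List.append_nil] at h2 ⊢
      rw [List.getLast?_flatten_replicate (h := by simp)]
      exact h2
    · rw [List.getLast?_append_of_ne_nil] at h2 ⊢
      · exact h2
      · simp [FreeGroup.invRev]
      · simp [FreeGroup.invRev]
  · simp [add_mul]

lemma inv_aux (w : F) : hd w⁻¹ = lt w ∧ lt w⁻¹ = hd w ∧
    w⁻¹.toWord.length = w.toWord.length := by
  simp [hd, lt, FreeGroup.toWord_inv, FreeGroup.invRev, Function.comp_def]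

lemma zpow_aux (w : F) (i : Fin 2) (h1 : hd w = some i) (h2 : lt w = some i) (n : ℤ)
    (hn : n ≠ 0) :
    hd (w ^ n) = some i ∧ lt (w ^ n) = some i ∧
      w.toWord.length ≤ (w ^ n).toWord.length := by
  rcases n with n | n
  · obtain ⟨m, rfl⟩ : ∃ m, n = m + 1 := Nat.exists_eq_add_one_of_ne_zero (by simpa using hn)
    simpa only [Int.ofNat_eq_natCast, zpow_natCast] using pow_aux w i h1 h2 m
  · rw [zpow_negSucc]
    obtain ⟨ha, hb, hc⟩ := pow_aux w i h1 h2 n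
    obtain ⟨ha', hb', hc'⟩ := inv_aux (w ^ (n+1))
    rw [ha', hb', hc']
    exact ⟨hb, ha, hc⟩

abbrev a : F := FreeGroup.of 0
abbrev b : F := FreeGroup.of 1

lemma hd_a : hd a = some 0 := by simp [hd]
lemma lt_a : lt a = some 0 := by simp [lt]

/-- Elements reachable as alternating products of powers of `a` and `w`; the flag is `true` when
the product is trivial or starts with a power of `a`. -/
inductive R (w : F) : Bool → F → Prop
  | one : R w true 1
  | pow (k : ℤ) (hk : k ≠ 0) : R w true (a ^ k)
  | mul (k : ℤ) (hk : k ≠ 0) (x : F) (hx : R w false x) : R w true (a ^ k * x)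
  | mulw (k : ℤ) (hk : k ≠ 0) (x : F) (hx : R w true x) : R w false (w ^ k * x)

abbrev RA (w : F) : F → Prop := R w true
abbrev RB (w : F) : F → Prop := R w false

lemma RA_mul_a (w x : F) (h : RA w x ∨ RB w x) (k : ℤ) : RA w (a ^ k * x) ∨ RB w (a ^ k * x) := by
  by_cases hk : k = 0
  · subst hk; simpa using h
  rcases h with h | h
  · cases h with
    | one => left; simpa using R.pow k hk
    | pow l hl =>
      rw [← zpow_add]
      by_cases h0 : k + l = 0
      · rw [h0, zpow_zero]; exact Or.inl .one
      · exact Or.inl (.pow _ h0)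
    | mul l hl x hx =>
      rw [← mul_assoc, ← zpow_add]
      by_cases h0 : k + l = 0
      · rw [h0, zpow_zero, one_mul]; exact Or.inr hx
      · exact Or.inl (.mul _ h0 _ hx)
  · exact Or.inl (.mul k hk x h)

lemma RA_mul_w (w x : F) (h : RA w x ∨ RB w x) (k : ℤ) : RA w (w ^ k * x) ∨ RB w (w ^ k * x) := by
  by_cases hk : k = 0
  · subst hk; simpa using h
  rcases h with h | h
  · exact Or.inr (.mulw k hk x h)
  · cases h with
    | mulw l hl x hx =>
      rw [← mul_assoc, ← zpow_add]
      by_cases h0 : k + l = 0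
      · rw [h0, zpow_zero, one_mul]; exact Or.inl hx
      · exact Or.inr (.mulw _ h0 _ hx)

lemma R_spec (w : F) (h1 : hd w = some 1) (h2 : lt w = some 1) (h3 : 2 ≤ w.toWord.length)
    (t : Bool) (x : F) (h : R w t x) :
    (t = true → x = 1 ∨ hd x = some 0) ∧ (t = false → hd x = some 1 ∧ 2 ≤ x.toWord.length) := by
  induction h with
  | one => simp
  | pow k hk => simp [(zpow_aux a 0 hd_a lt_a k hk).1]
  | mul k hk x hx ih =>
    refine ⟨fun _ => Or.inr ?_, by simp⟩
    obtain ⟨e1, e2, _⟩ := zpow_aux a 0 hd_a lt_a k hk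
    rw [hd_mul _ _ 0 1 (by decide) e2 (ih.2 rfl).1, e1]
  | mulw k hk x hx ih =>
    refine ⟨by simp, fun _ => ?_⟩
    obtain ⟨e1, e2, e3⟩ := zpow_aux w 1 h1 h2 k hk
    rcases ih.1 rfl with rfl | h
    · rw [mul_one]; exact ⟨e1, h3.trans e3⟩
    · rw [hd_mul _ _ 1 0 (by decide) e2 h, toWord_mul_of_ne _ _ 1 0 (by decide) e2 h,
        List.length_append]
      exact ⟨e1, by omega⟩

lemma reach (ψ : F →* F) (w : F) (ha : ψ a = a) (hb : ψ b = w) (x : F) :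
    RA w (ψ x) ∨ RB w (ψ x) := by
  have key : ∀ x : F, ∀ y : F, (RA w y ∨ RB w y) → (RA w (ψ x * y) ∨ RB w (ψ x * y)) := by
    intro x
    induction x using FreeGroup.induction_on with
    | C1 => intro y hy; simpa using hy
    | of i =>
      intro y hy
      fin_cases i
      · simpa [ha] using RA_mul_a w y hy 1
      · have := RA_mul_w w y hy 1
        simpa [hb] using this
    | inv_of i _ =>
      intro y hy
      fin_cases i
      · simpa [ha] using RA_mul_a w y hy (-1)
      · have := RA_mul_w w y hy (-1)
        simpa [hb] using this
    | mul x y hx hy =>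
      intro z hz
      rw [map_mul, mul_assoc]
      exact hx _ (hy _ hz)
  simpa using key x 1 (Or.inl .one)

lemma strip (n : ℕ) : ∀ g : F, g.toWord.length ≤ n → ∃ (k l : ℤ) (w : F), g = a ^ k * w * a ^ l ∧
    (w = 1 ∨ (hd w = some 1 ∧ lt w = some 1)) := by
  induction n with
  | zero =>
    intro g hg
    refine ⟨0, 0, 1, ?_, Or.inl rfl⟩
    have : g.toWord = [] := by simpa using hg
    simpa using this
  | succ n ih =>
    intro g hg
    by_cases h0 : g = 1
    · exact ⟨0, 0, 1, by simpa using h0, Or.inl rfl⟩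
    have hne : g.toWord ≠ [] := by simpa using h0
    have step (s : Bool) : ∃ e : ℤ, (FreeGroup.mk [((0 : Fin 2), s)] : F) = a ^ e := by
      cases s
      · exact ⟨-1, by simp [FreeGroup.of, FreeGroup.inv_mk, FreeGroup.invRev]⟩
      · exact ⟨1, by simp [FreeGroup.of]⟩
    obtain ⟨⟨i, s⟩, L, hL⟩ := List.exists_cons_of_ne_nil hne
    obtain ⟨L', ⟨j, t⟩, hL'⟩ := List.eq_nil_or_concat g.toWord |>.resolve_left hne
    by_cases hi : i = 0
    · subst hi
      obtain ⟨e, he⟩ := step s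
      obtain ⟨k, l, w, hw, hw'⟩ := ih (FreeGroup.mk L) (by
        refine (FreeGroup.norm_mk_le).trans ?_
        rw [hL] at hg; simpa using hg)
      refine ⟨e + k, l, w, ?_, hw'⟩
      rw [← FreeGroup.mk_toWord (x := g), hL, ← List.singleton_append, ← FreeGroup.mul_mk, he, hw,
        zpow_add]
      group
    by_cases hj : j = 0
    · subst hj
      obtain ⟨e, he⟩ := step t
      obtain ⟨k, l, w, hw, hw'⟩ := ih (FreeGroup.mk L') (by
        refine (FreeGroup.norm_mk_le).trans ?_
        rw [hL'] at hg; simpa using hg)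
      refine ⟨k, l + e, w, ?_, hw'⟩
      rw [← FreeGroup.mk_toWord (x := g), hL', List.concat_eq_append, ← FreeGroup.mul_mk, he, hw,
        zpow_add]
      group
    refine ⟨0, 0, g, by simp, Or.inr ⟨?_, ?_⟩⟩
    · simp only [hd, hL]; simp; omega
    · simp only [lt, hL']; simp; omega

lemma b_not_reach (w : F) (h1 : hd w = some 1) (h2 : lt w = some 1) (h3 : 2 ≤ w.toWord.length) :
    ¬ (RA w b ∨ RB w b) := by
  rintro (h | h)
  · rcases (R_spec w h1 h2 h3 _ _ h).1 rfl with h | h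
    · exact FreeGroup.of_ne_one _ h
    · simp [hd] at h
  · have := ((R_spec w h1 h2 h3 _ _ h).2 rfl).2
    simp at this

/-- exponent sum of letter `i` -/
def expo (i : Fin 2) : F →* Multiplicative ℤ :=
  FreeGroup.lift fun j => if j = i then Multiplicative.ofAdd 1 else 1

lemma shape_thm (f : MulAut F) (hf : f a = a) :
    ∃ (n m : ℤ) (ε : ℤˣ), f b = a ^ n * b ^ (ε : ℤ) * a ^ m := by
  obtain ⟨k, l, w, hw, hw'⟩ := strip _ (f b) le_rfl
  rcases hw' with rfl | ⟨h1, h2⟩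
  · exfalso
    have : f b = f (a ^ (k + l)) := by
      rw [hw, map_zpow, hf, zpow_add, mul_one]
    have := f.injective this
    have := congrArg (expo 1) this
    simp [expo] at this
  by_cases h3 : 2 ≤ w.toWord.length
  · exfalso
    let T : F →* F := FreeGroup.lift fun j => if j = 0 then a else a ^ (-k) * b * a ^ (-l)
    have hT0 : T a = a := by simp [T]
    have hT1 : T b = a ^ (-k) * b * a ^ (-l) := by simp [T]
    let Q : F →* F := FreeGroup.lift fun j => if j = 0 then a else a ^ k * b * a ^ l
    have hQ0 : Q a = a := by simp [Q]
    have hQ1 : Q b = a ^ k * b * a ^ l := by simp [Q]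
    have hTT : ∀ x, T (Q x) = x := by
      intro x
      have : T.comp Q = MonoidHom.id F := by
        ext j
        fin_cases j
        · change T (Q a) = a
          rw [hQ0, hT0]
        · change T (Q b) = b
          rw [hQ1, map_mul, map_mul, map_zpow, map_zpow, hT0, hT1]
          group
      exact DFunLike.congr_fun this x
    have := reach ((f : F →* F).comp T) w (by simp [hT0, hf]) (by
      simp only [MonoidHom.comp_apply, hT1]
      change f _ = w
      rw [map_mul, map_mul, map_zpow, map_zpow, hf, hw]
      group) (Q (f.symm b))
    rw [MonoidHom.comp_apply, hTT] at this
    refine b_not_reach w h1 h2 h3 ?_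
    simpa using this
  · have hlen : w.toWord.length = 1 := by
      have : w.toWord.length ≠ 0 := by
        intro h
        rw [List.length_eq_zero_iff] at h
        simp [hd, h] at h1
      omega
    obtain ⟨⟨i, s⟩, hs⟩ := List.length_eq_one_iff.1 hlen
    have : i = 1 := by simpa [hd, hs] using h1
    subst this
    have hw2 : w = FreeGroup.mk [((1 : Fin 2), s)] := by
      rw [← hs, FreeGroup.mk_toWord]
    cases s
    · exact ⟨k, l, -1, by rw [hw, hw2]; simp [FreeGroup.of, FreeGroup.inv_mk, FreeGroup.invRev]⟩
    · exact ⟨k, l, 1, by rw [hw, hw2]; simp [FreeGroup.of]⟩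

/-- the relative automorphism group -/
abbrev RAut : Subgroup (MulAut F) := relAut fun _ : Unit => Subgroup.closure {FreeGroup.of (0 : Fin 2)}

lemma mem_RAut (f : MulAut F) : f ∈ RAut ↔ ∃ g : F, f a = g * a * g⁻¹ := by
  constructor
  · intro h
    obtain ⟨g, hg⟩ := h ()
    exact ⟨g, hg _ (Subgroup.subset_closure rfl)⟩
  · rintro ⟨g, hg⟩ _
    refine ⟨g, fun x hx => ?_⟩
    rw [← Subgroup.zpowers_eq_closure] at hx
    obtain ⟨k, rfl⟩ := hx
    change f (a ^ k) = g * a ^ k * g⁻¹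
    rw [map_zpow, hg, conj_zpow]

lemma normal_form (f : MulAut F) (hf : f ∈ RAut) : ∃ (g : F) (n : ℤ) (ε : ℤˣ),
    f a = g * a * g⁻¹ ∧ f b = g * (a ^ n * b ^ (ε : ℤ)) * g⁻¹ := by
  obtain ⟨g, hg⟩ := (mem_RAut f).1 hf
  obtain ⟨n, m, ε, h⟩ := shape_thm (MulAut.conj g⁻¹ * f) (by
    simp [MulAut.mul_apply, hg, mul_assoc])
  have hb : f b = g * (a ^ n * b ^ (ε : ℤ) * a ^ m) * g⁻¹ := by
    rw [← h]
    simp [MulAut.mul_apply, mul_assoc]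
  refine ⟨g * a ^ (-m), m + n, ε, ?_, ?_⟩
  · rw [hg]; group
  · rw [hb]; group

lemma expo_b (n : ℤ) (e : ℤ) (g : F) :
    (expo 1 (g * (a ^ n * b ^ e) * g⁻¹)).toAdd = e := by
  simp [expo]

lemma expo_a (n : ℤ) (e : ℤ) (g : F) :
    (expo 0 (g * (a ^ n * b ^ e) * g⁻¹)).toAdd = n := by
  simp [expo]

lemma expo_comp (f : MulAut F) (hf : f ∈ RAut) (x : F) :
    (expo 1 (f x)).toAdd = (expo 1 (f b)).toAdd * (expo 1 x).toAdd := by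
  obtain ⟨g, hg⟩ := (mem_RAut f).1 hf
  have : (expo 1).comp (f : F →* F) = (zpowGroupHom (expo 1 (f b)).toAdd).comp (expo 1) := by
    ext j
    fin_cases j
    · change (expo 1 (f a)).toAdd = ((expo 1 a) ^ (expo 1 (f b)).toAdd).toAdd
      rw [hg]; simp [expo]
    · change (expo 1 (f b)).toAdd = ((expo 1 b) ^ (expo 1 (f b)).toAdd).toAdd
      simp [expo]
  have h := congrArg Multiplicative.toAdd (DFunLike.congr_fun this x)
  simpa using h

/-- the sign on automorphisms -/
def sgn0 : RAut →* ℤ where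
  toFun f := (expo 1 (f.1 b)).toAdd
  map_one' := by simp [expo]
  map_mul' f g := by
    change (expo 1 (f.1 (g.1 b))).toAdd = _
    rw [expo_comp f.1 f.2]

/-- the sign, with values in units -/
def sgn : RAut →* ℤˣ := sgn0.toHomUnits

lemma sgn_coe (f : RAut) : ((sgn f : ℤˣ) : ℤ) = (expo 1 (f.1 b)).toAdd := rfl

/-- The relative outer automorphism group -/
abbrev ROut := Subgroup.map (QuotientGroup.mk' (innAut F)) RAut

/-- the projection -/
abbrev proj : RAut →* ROut := (QuotientGroup.mk' (innAut F)).subgroupMap RAut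

lemma proj_surj : Function.Surjective proj := MonoidHom.subgroupMap_surjective _ _

lemma proj_eq_one (f : RAut) : proj f = 1 ↔ ∃ g : F, MulAut.conj g = f.1 := by
  rw [← Subtype.coe_inj]
  change (QuotientGroup.mk' (innAut F)) f.1 = 1 ↔ _
  rw [QuotientGroup.mk'_apply, QuotientGroup.eq_one_iff]
  rfl

lemma ker_le : proj.ker ≤ sgn.ker := by
  intro f hf
  obtain ⟨g, hg⟩ := (proj_eq_one f).1 hf
  rw [MonoidHom.mem_ker]
  ext
  rw [sgn_coe, ← hg]
  simp [expo]

/-- the sign homomorphism -/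
noncomputable def phi : ROut →* ℤˣ := proj.liftOfSurjective proj_surj ⟨sgn, ker_le⟩

lemma phi_proj (f : RAut) : phi (proj f) = sgn f :=
  MonoidHom.liftOfRightInverse_comp_apply _ _ _ _ f

/-- inversion of `b` -/
def flipHom : F →* F := FreeGroup.lift fun j => if j = 0 then a else b⁻¹

lemma flip_flip : flipHom.comp flipHom = MonoidHom.id F := by
  ext j
  fin_cases j <;> simp [flipHom]

/-- inversion of `b` as automorphism -/
def flipAut : MulAut F := MonoidHom.toMulEquiv flipHom flipHom flip_flip flip_flip

/-- transvection -/
def twHom (k : ℤ) : F →* F := FreeGroup.lift fun j => if j = 0 then a else a ^ k * b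

lemma twHom_a (k : ℤ) : twHom k a = a := by simp [twHom]
lemma twHom_b (k : ℤ) : twHom k b = a ^ k * b := by simp [twHom]

lemma hom_ext (f g : F →* F) (ha : f a = g a) (hb : f b = g b) : f = g := by
  ext j
  fin_cases j
  · exact ha
  · exact hb

lemma twHom_comp (k l : ℤ) : (twHom k).comp (twHom l) = twHom (k + l) := by
  apply hom_ext
  · simp only [MonoidHom.comp_apply, twHom_a]
  · simp only [MonoidHom.comp_apply, twHom_a, twHom_b, map_mul, map_zpow]
    rw [← mul_assoc, ← zpow_add, add_comm]

lemma twHom_zero : twHom 0 = MonoidHom.id F := by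
  apply hom_ext
  · simp [twHom_a]
  · simp [twHom_b]

/-- transvection as automorphism -/
def tw (k : ℤ) : MulAut F := MonoidHom.toMulEquiv (twHom k) (twHom (-k))
  (by rw [twHom_comp, neg_add_cancel, twHom_zero]) (by rw [twHom_comp, add_neg_cancel, twHom_zero])

lemma tw_apply (k : ℤ) (x : F) : tw k x = twHom k x := rfl

lemma tw_mem (k : ℤ) : tw k ∈ RAut := (mem_RAut _).2 ⟨1, by simp [tw_apply, twHom_a]⟩

/-- transvections as a homomorphism -/
def twist : Multiplicative ℤ →* RAut where
  toFun k := ⟨tw k.toAdd, tw_mem _⟩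
  map_one' := by
    ext x : 2
    change twHom 0 x = x
    rw [twHom_zero]; rfl
  map_mul' k l := by
    ext x : 2
    change twHom (k.toAdd + l.toAdd) x = twHom k.toAdd (twHom l.toAdd x)
    rw [← twHom_comp]; rfl

lemma sgn_twist (k : Multiplicative ℤ) : sgn (twist k) = 1 := by
  ext
  rw [sgn_coe]
  change (expo 1 (twHom _ b)).toAdd = _
  simp [twHom_b, expo]

/-- transvections into the kernel -/
noncomputable def toKer : Multiplicative ℤ →* phi.ker :=
  (proj.comp twist).codRestrict phi.ker fun k => by
    rw [MonoidHom.mem_ker, MonoidHom.comp_apply, phi_proj, sgn_twist]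

lemma toKer_bij : Function.Bijective toKer := by
  constructor
  · rw [injective_iff_map_eq_one]
    intro k hk
    have h1 : proj (twist k) = 1 := congrArg Subtype.val hk
    obtain ⟨g, hg⟩ := (proj_eq_one _).1 h1
    have h2 : MulAut.conj g b = twHom k.toAdd b := by rw [hg]; rfl
    have h3 := congrArg (fun x => (expo 0 x).toAdd) h2
    simp only [twHom_b, MulAut.conj_apply] at h3
    apply Multiplicative.toAdd.injective
    simpa [expo] using h3.symm
  · rintro ⟨y, hy⟩
    obtain ⟨f, rfl⟩ := proj_surj y
    obtain ⟨g, n, ε, h1, h2⟩ := normal_form f.1 f.2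
    rw [MonoidHom.mem_ker, phi_proj] at hy
    have hε : (ε : ℤ) = 1 := by
      have := sgn_coe f
      rw [hy, h2, expo_b] at this
      simpa using this.symm
    refine ⟨Multiplicative.ofAdd n, Subtype.ext ?_⟩
    change proj (twist (Multiplicative.ofAdd n)) = proj f
    rw [← mul_inv_eq_one, ← map_inv, ← map_mul, ← inv_eq_one, ← map_inv, proj_eq_one]
    refine ⟨g, ?_⟩
    rw [mul_inv_rev, inv_inv]
    change MulAut.conj g = f.1 * (tw n)⁻¹
    rw [eq_mul_inv_iff_mul_eq]
    have : ((MulAut.conj g * tw n : MulAut F) : F →* F) = ((f.1 : MulAut F) : F →* F) := by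
      apply hom_ext
      · change g * twHom n a * g⁻¹ = f.1 a
        rw [twHom_a, h1]
      · change g * twHom n b * g⁻¹ = f.1 b
        rw [twHom_b, h2, hε, zpow_one]
    ext x : 1
    exact DFunLike.congr_fun this x

lemma phi_surj : Function.Surjective phi := by
  intro u
  rcases Int.units_eq_one_or u with rfl | rfl
  · exact ⟨1, map_one _⟩
  · refine ⟨proj ⟨flipAut, (mem_RAut _).2 ⟨1, ?_⟩⟩, ?_⟩
    · change flipHom a = _
      simp [flipHom]
    · rw [phi_proj]
      ext
      rw [sgn_coe]
      change (expo 1 (flipHom b)).toAdd = _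
      simp [flipHom, expo]

lemma phi_conj (f : MulAut F) (hf : f ∈ RAut) :
    ∃ N : ℤ, IsConj (a ^ N * b ^ ((phi (proj ⟨f, hf⟩) : ℤˣ) : ℤ)) (f b) := by
  obtain ⟨g, n, ε, h1, h2⟩ := normal_form f hf
  refine ⟨n, ?_⟩
  rw [phi_proj, sgn_coe]
  simp only
  rw [h2, expo_b]
  exact isConj_iff.2 ⟨g, rfl⟩

end SignMap

/-- The sign map on `Out(F₂; ⟨a⟩)`: there is a surjective homomorphism to `ℤ/2`
(realized as `ℤˣ = {±1}`) sending the class of `f` to the sign `ε` with `f(b)`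
conjugate to `a^N b^ε`, and its kernel is isomorphic to `ℤ`. -/
theorem stmt_2 :
    ∃ φ : ↥(Subgroup.map (QuotientGroup.mk' (innAut (FreeGroup (Fin 2))))
        (relAut fun _ : Unit => Subgroup.closure {FreeGroup.of (0 : Fin 2)})) →* ℤˣ,
      Function.Surjective φ ∧
      (∀ (f : MulAut (FreeGroup (Fin 2)))
          (hf : f ∈ relAut fun _ : Unit => Subgroup.closure {FreeGroup.of (0 : Fin 2)}),
        ∃ N : ℤ,
          IsConj
            (FreeGroup.of (0 : Fin 2) ^ N *
              FreeGroup.of (1 : Fin 2) ^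
                ((φ ⟨QuotientGroup.mk' (innAut (FreeGroup (Fin 2))) f,
                    ⟨f, hf, rfl⟩⟩ : ℤˣ) : ℤ))
            (f (FreeGroup.of 1))) ∧
      Nonempty (↥φ.ker ≃* Multiplicative ℤ) := by
  exact ⟨SignMap.phi, SignMap.phi_surj, fun f hf => SignMap.phi_conj f hf,
    ⟨(MulEquiv.ofBijective SignMap.toKer SignMap.toKer_bij).symm⟩⟩
end

section
/- The images in Out(F_n) of the automorphisms α_i, β_i (1 ≤ i ≤ n-∑s(j)), γ_j (1 < j ≤ k), δ_r (1 < r ≤ k-m) generate a free abelian subgroup of Out(F_n; A_1, …, A_k) of rank 2(n - ∑_{j=1}^k s(j)) + 2k - 2 - m, where m is the number of indices with s(j)=1 (assumed to be j = k-m+1, …, k). -/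
section Model
/-- Free basis: generators `y_p^j` (`j < k`, `p < s j`) and `x_i` (`i < N`). -/
abbrev RBasis (k N : ℕ) (s : Fin k → ℕ) : Type := (Σ j : Fin k, Fin (s j)) ⊕ Fin N

/-- The free group `F_n` on that basis, `n = s 1 + ⋯ + s k + N`. -/
abbrev RF (k N : ℕ) (s : Fin k → ℕ) : Type := FreeGroup (RBasis k N s)

variable {k N : ℕ} {s : Fin k → ℕ}

/-- The generator `y_p^j`. -/
def yg (j : Fin k) (p : Fin (s j)) : RF k N s := FreeGroup.of (Sum.inl ⟨j, p⟩)

/-- The generator `x_i`. -/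
def xg (i : Fin N) : RF k N s := FreeGroup.of (Sum.inr i)

/-- The free factor `A_j = ⟨y_1^j, …, y_{s(j)}^j⟩`. -/
def factor (j : Fin k) : Subgroup (RF k N s) := Subgroup.closure (Set.range fun p => yg (N := N) j p)

/-- The endomorphism conjugating the generators of the `j`-th block by `g`
and fixing all other basis elements. -/
def conjBlockHom (g : RF k N s) (j : Fin k) : RF k N s →* RF k N s :=
  FreeGroup.lift fun t => match t with
    | Sum.inl ⟨j', p⟩ =>
        if j' = j then g * FreeGroup.of (Sum.inl ⟨j', p⟩) * g⁻¹
        else FreeGroup.of (Sum.inl ⟨j', p⟩)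
    | Sum.inr i => FreeGroup.of (Sum.inr i)

/-- The endomorphism `x_i ↦ g * x_i`, fixing all other basis elements. -/
def leftMulHom (g : RF k N s) (i : Fin N) : RF k N s →* RF k N s :=
  FreeGroup.lift fun t => match t with
    | Sum.inr i' => if i' = i then g * FreeGroup.of (Sum.inr i') else FreeGroup.of (Sum.inr i')
    | t => FreeGroup.of t

/-- The endomorphism `x_i ↦ x_i * g⁻¹`, fixing all other basis elements. -/
def rightMulInvHom (g : RF k N s) (i : Fin N) : RF k N s →* RF k N s :=
  FreeGroup.lift fun t => match t with
    | Sum.inr i' => if i' = i then FreeGroup.of (Sum.inr i') * g⁻¹ else FreeGroup.of (Sum.inr i')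
    | t => FreeGroup.of t

variable (hk : 0 < k) (hs : ∀ j, 0 < s j)

/-- The element `y_1^1`. -/
def y11 (hk : 0 < k) (hs : ∀ j, 0 < s j) : RF k N s := yg ⟨0, hk⟩ ⟨0, hs _⟩

/-- `α_i : x_i ↦ y_1^1 x_i`. -/
def alphaHom (i : Fin N) : RF k N s →* RF k N s := leftMulHom (y11 hk hs) i

/-- `β_i : x_i ↦ x_i (y_1^1)⁻¹`. -/
def betaHom (i : Fin N) : RF k N s →* RF k N s := rightMulInvHom (y11 hk hs) i

/-- `γ_j`: conjugation of the `j`-th block by `y_1^1`. -/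
def gammaHom (j : Fin k) : RF k N s →* RF k N s := conjBlockHom (y11 hk hs) j

/-- `δ_j`: conjugation of the `j`-th block by `y_1^j`. -/
def deltaHom (j : Fin k) : RF k N s →* RF k N s := conjBlockHom (yg j ⟨0, hs j⟩) j

end Model

/-- Integral Heisenberg group. -/
@[ext] structure Heis where
  x : ℤ
  y : ℤ
  z : ℤ

namespace Heis

instance : Mul Heis := ⟨fun a b => ⟨a.x + b.x, a.y + b.y, a.z + b.z + a.x * b.y⟩⟩
instance : One Heis := ⟨⟨0, 0, 0⟩⟩
instance : Inv Heis := ⟨fun a => ⟨-a.x, -a.y, -a.z + a.x * a.y⟩⟩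

@[simp] lemma mul_x (a b : Heis) : (a * b).x = a.x + b.x := rfl
@[simp] lemma mul_y (a b : Heis) : (a * b).y = a.y + b.y := rfl
@[simp] lemma mul_z (a b : Heis) : (a * b).z = a.z + b.z + a.x * b.y := rfl
@[simp] lemma one_x : (1 : Heis).x = 0 := rfl
@[simp] lemma one_y : (1 : Heis).y = 0 := rfl
@[simp] lemma one_z : (1 : Heis).z = 0 := rfl
@[simp] lemma inv_x (a : Heis) : (a⁻¹).x = -a.x := rfl
@[simp] lemma inv_y (a : Heis) : (a⁻¹).y = -a.y := rfl
@[simp] lemma inv_z (a : Heis) : (a⁻¹).z = -a.z + a.x * a.y := rfl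

instance : Group Heis := Group.ofLeftAxioms
  (by intro a b c; ext <;> simp <;> ring)
  (by intro a; ext <;> simp)
  (by intro a; ext <;> simp)

/-- First coordinate. -/
def xHom : Heis →* Multiplicative ℤ where
  toFun a := Multiplicative.ofAdd a.x
  map_one' := rfl
  map_mul' _ _ := rfl

/-- Second coordinate. -/
def yHom : Heis →* Multiplicative ℤ where
  toFun a := Multiplicative.ofAdd a.y
  map_one' := rfl
  map_mul' _ _ := rfl

lemma zpow_x (a : Heis) (n : ℤ) : (a ^ n).x = n * a.x := by
  have := congrArg Multiplicative.toAdd (map_zpow xHom a n)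
  simpa [xHom] using this

lemma zpow_y (a : Heis) (n : ℤ) : (a ^ n).y = n * a.y := by
  have := congrArg Multiplicative.toAdd (map_zpow yHom a n)
  simpa [yHom] using this

lemma conj_z (g h : Heis) : (g * h * g⁻¹).z = h.z + g.x * h.y - h.x * g.y := by
  simp; ring

end Heis

section Expo
variable {B : Type*} [DecidableEq B]

/-- Exponent sum. -/
def expo (p : B) : FreeGroup B →* Multiplicative ℤ :=
  FreeGroup.lift fun t => if t = p then Multiplicative.ofAdd 1 else 1

/-- Test map to the Heisenberg group. -/
def hei (p q : B) : FreeGroup B →* Heis :=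
  FreeGroup.lift fun t => if t = p then ⟨1, 0, 0⟩ else if t = q then ⟨0, 1, 0⟩ else 1

lemma hei_of (p q t : B) : hei p q (FreeGroup.of t) =
    if t = p then ⟨1, 0, 0⟩ else if t = q then ⟨0, 1, 0⟩ else 1 := by
  simp [hei]

lemma hei_x (p q : B) (g : FreeGroup B) :
    (hei p q g).x = (expo p g).toAdd := by
  have : Heis.xHom.comp (hei p q) = expo p := by
    apply FreeGroup.ext_hom
    intro t
    simp only [MonoidHom.comp_apply, hei, expo, FreeGroup.lift_apply_of]
    split_ifs <;> rfl
  rw [← this]; rfl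

lemma hei_y {p q : B} (h : p ≠ q) (g : FreeGroup B) :
    (hei p q g).y = (expo q g).toAdd := by
  have : Heis.yHom.comp (hei p q) = expo q := by
    apply FreeGroup.ext_hom
    intro t
    simp only [MonoidHom.comp_apply, hei, expo, FreeGroup.lift_apply_of]
    split_ifs with h1 h2 h3
    · exact absurd (h1.symm.trans h2) h
    all_goals rfl
  rw [← this]; rfl
end Expo

section Generic

lemma closure_single_top (ι : Type*) [Fintype ι] [DecidableEq ι] :
    Subgroup.closure (Set.range fun i : ι => Multiplicative.ofAdd (Pi.single i (1 : ℤ) : ι → ℤ))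
      = ⊤ := by
  rw [eq_top_iff]
  intro v _
  have : v = ∏ i, (Multiplicative.ofAdd (Pi.single i (1 : ℤ) : ι → ℤ)) ^ (v.toAdd i) := by
    apply Multiplicative.toAdd.injective
    rw [toAdd_prod]
    funext j
    simp [Finset.sum_apply, Pi.single_apply]
  rw [this]
  exact Subgroup.prod_mem _ fun i _ => Subgroup.zpow_mem _ (Subgroup.subset_closure (Set.mem_range_self i)) _

/-- Extension by zero. -/
def extZ {J : Type*} [DecidableEq J] (T : Finset J) : (T → ℤ) →+ (J → ℤ) where
  toFun v j := if h : j ∈ T then v ⟨j, h⟩ else 0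
  map_zero' := by funext j; simp
  map_add' v w := by
    funext j
    by_cases h : j ∈ T <;> simp [h]

lemma generic {J G : Type*} [DecidableEq J] [Group G] (Φ : Multiplicative (J → ℤ) →* G)
    (T : Finset J) (n : ℕ) (hn : T.card = n)
    (hinj : ∀ v : J → ℤ, (∀ j, j ∉ T → v j = 0) → Φ (Multiplicative.ofAdd v) = 1 → v = 0) :
    Nonempty (↥(Subgroup.closure
      ((fun j => Φ (Multiplicative.ofAdd (Pi.single j (1 : ℤ)))) '' (T : Set J))) ≃*
        Multiplicative (Fin n → ℤ)) := by
  let Θ : Multiplicative (T → ℤ) →* G := Φ.comp (AddMonoidHom.toMultiplicative (extZ T))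
  have hΘ : Function.Injective Θ := by
    rw [injective_iff_map_eq_one]
    intro v hv
    have h := hinj (extZ T v.toAdd) (by intro j hj; simp [extZ, hj]) hv
    apply Multiplicative.toAdd.injective
    funext j
    have := congrFun h j
    simpa [extZ] using this
  have hset : ((fun j => Φ (Multiplicative.ofAdd (Pi.single j (1 : ℤ)))) '' (T : Set J)) =
      Θ '' (Set.range fun i : T => Multiplicative.ofAdd (Pi.single i (1 : ℤ) : T → ℤ)) := by
    have key : ∀ i : T, extZ T (Pi.single i (1 : ℤ)) = Pi.single (i : J) (1 : ℤ) := by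
      intro i
      funext j
      by_cases h : j ∈ T
      · simp [extZ, h, Pi.single_apply, Subtype.ext_iff]
      · have : j ≠ i := fun e => h (e ▸ i.2)
        simp [extZ, h, Pi.single_apply, this]
    have key2 : ∀ i : T, Θ (Multiplicative.ofAdd (Pi.single i (1 : ℤ) : T → ℤ)) =
        Φ (Multiplicative.ofAdd (Pi.single (i : J) (1 : ℤ))) := by
      intro i
      rw [← key i]; rfl
    ext g
    constructor
    · rintro ⟨j, hj, rfl⟩
      exact ⟨_, ⟨⟨j, hj⟩, rfl⟩, key2 ⟨j, hj⟩⟩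
    · rintro ⟨_, ⟨i, rfl⟩, rfl⟩
      exact ⟨i, i.2, (key2 i).symm⟩
  rw [hset, ← MonoidHom.map_closure, closure_single_top, ← MonoidHom.range_eq_map]
  have e : T ≃ Fin n := Fintype.equivFinOfCardEq (by simpa using hn)
  exact ⟨(MonoidHom.ofInjective hΘ).symm.trans
    (AddEquiv.toMultiplicative (AddEquiv.arrowCongr e (AddEquiv.refl ℤ)))⟩

lemma generic_erase {J G : Type*} [DecidableEq J] [Group G] (Φ : Multiplicative (J → ℤ) →* G)
    (T : Finset J) (i₀ : J)
    (h : Φ (Multiplicative.ofAdd (∑ j ∈ T, Pi.single j (1 : ℤ))) = 1) :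
    Subgroup.closure
      ((fun j => Φ (Multiplicative.ofAdd (Pi.single j (1 : ℤ)))) '' (T : Set J)) =
    Subgroup.closure
      ((fun j => Φ (Multiplicative.ofAdd (Pi.single j (1 : ℤ)))) '' ((T.erase i₀ : Finset J) : Set J)) := by
  apply le_antisymm
  · rw [Subgroup.closure_le]
    rintro _ ⟨j, hj, rfl⟩
    by_cases hji : j = i₀
    · subst hji
      have hj' : j ∈ T := hj
      rw [← Finset.add_sum_erase _ _ hj', ofAdd_add, map_mul] at h
      have h2 := eq_inv_of_mul_eq_one_left h
      simp only [SetLike.mem_coe]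
      rw [h2]
      apply Subgroup.inv_mem
      rw [ofAdd_sum]
      have : (fun j => Φ (Multiplicative.ofAdd (Pi.single j (1 : ℤ)))) =
        Φ ∘ (fun j => (Multiplicative.ofAdd (Pi.single j (1 : ℤ) : J → ℤ))) := rfl
      rw [this, Set.image_comp, ← MonoidHom.map_closure]
      apply Subgroup.mem_map_of_mem
      exact Subgroup.prod_mem _ fun i hi => Subgroup.subset_closure ⟨i, hi, rfl⟩
    · exact Subgroup.subset_closure ⟨j, by simpa [hji] using hj, rfl⟩
  · apply Subgroup.closure_mono
    apply Set.image_mono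
    simp
end Generic

section Psi
variable {k N : ℕ} {s : Fin k → ℕ} (hk : 0 < k) (hs : ∀ j, 0 < s j)

/-- Parameter indices. -/
abbrev PJ (k N : ℕ) : Type := Fin N ⊕ (Fin N ⊕ (Fin k ⊕ Fin k))
abbrev ja (i : Fin N) : PJ k N := Sum.inl i
abbrev jb (i : Fin N) : PJ k N := Sum.inr (Sum.inl i)
abbrev jc (j : Fin k) : PJ k N := Sum.inr (Sum.inr (Sum.inl j))
abbrev jd (j : Fin k) : PJ k N := Sum.inr (Sum.inr (Sum.inr j))

/-- Conjugator on block `j`. -/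
def cj (v : PJ k N → ℤ) (j : Fin k) : RF k N s :=
  y11 hk hs ^ v (jc j) * yg j ⟨0, hs j⟩ ^ v (jd j)

/-- The general product. -/
def psiHom (v : PJ k N → ℤ) : RF k N s →* RF k N s :=
  FreeGroup.lift fun t => match t with
    | Sum.inl ⟨j, p⟩ => cj hk hs v j * yg j p * (cj hk hs v j)⁻¹
    | Sum.inr i => y11 hk hs ^ v (ja i) * xg i * y11 hk hs ^ (- v (jb i))

lemma psiHom_y (v : PJ k N → ℤ) (j : Fin k) (p : Fin (s j)) :
    psiHom hk hs v (yg j p) = cj hk hs v j * yg j p * (cj hk hs v j)⁻¹ := by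
  simp [psiHom, yg]

lemma psiHom_x (v : PJ k N → ℤ) (i : Fin N) :
    psiHom hk hs v (xg i) = y11 hk hs ^ v (ja i) * xg i * y11 hk hs ^ (- v (jb i)) := by
  simp [psiHom, xg]

lemma psiHom_a (v : PJ k N → ℤ) : psiHom hk hs v (y11 hk hs) = y11 hk hs := by
  rw [y11, psiHom_y, cj, y11]
  group

lemma psiHom_ext {f g : RF k N s →* RF k N s} (hy : ∀ j p, f (yg j p) = g (yg j p))
    (hx : ∀ i, f (xg i) = g (xg i)) : f = g := by
  apply FreeGroup.ext_hom
  rintro (⟨j, p⟩ | i)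
  · exact hy j p
  · exact hx i

lemma psiHom_add (v w : PJ k N → ℤ) :
    psiHom (s := s) hk hs (v + w) = (psiHom hk hs v).comp (psiHom hk hs w) := by
  apply psiHom_ext
  · intro j p
    simp only [MonoidHom.comp_apply, psiHom_y, map_mul, map_inv]
    have : psiHom hk hs v (cj hk hs w j) * cj hk hs v j = cj (s := s) hk hs (v + w) j := by
      conv_lhs => rw [cj]
      simp only [map_mul, map_zpow, psiHom_a, psiHom_y, conj_zpow, cj, Pi.add_apply]
      group
    rw [← this]
    group
  · intro i
    simp only [MonoidHom.comp_apply, psiHom_x, map_mul, map_zpow, psiHom_a, Pi.add_apply]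
    group

lemma psiHom_zero : psiHom (s := s) hk hs (0 : PJ k N → ℤ) = MonoidHom.id _ := by
  apply psiHom_ext
  · intro j p; simp [psiHom_y, cj]
  · intro i; simp [psiHom_x]

/-- The hom to automorphisms. -/
def psi : Multiplicative (PJ k N → ℤ) →* MulAut (RF k N s) :=
  MonoidHom.mk' (fun v => MonoidHom.toMulEquiv (psiHom hk hs v.toAdd) (psiHom hk hs (-v.toAdd))
    (by rw [← psiHom_add, neg_add_cancel, psiHom_zero])
    (by rw [← psiHom_add, add_neg_cancel, psiHom_zero]))
    (by
      intro v w
      ext x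
      exact DFunLike.congr_fun (psiHom_add hk hs v.toAdd w.toAdd) x)

lemma psi_apply (v : PJ k N → ℤ) (x : RF k N s) :
    psi hk hs (Multiplicative.ofAdd v) x = psiHom hk hs v x := rfl

lemma psi_relAut (v : Multiplicative (PJ k N → ℤ)) :
    psi hk hs v ∈ relAut fun j : Fin k => factor (s := s) (N := N) j := by
  intro j
  refine ⟨cj hk hs v.toAdd j, fun x hx => ?_⟩
  have : Set.EqOn (psiHom hk hs v.toAdd)
      (MulAut.conj (cj (s := s) hk hs v.toAdd j)).toMonoidHom
      (Set.range fun p => yg (N := N) j p) := by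
    rintro _ ⟨p, rfl⟩
    simp [psiHom_y]
  have h2 := MonoidHom.eqOn_closure this hx
  exact h2

lemma alpha_eq (i : Fin N) : alphaHom hk hs i = psiHom (s := s) hk hs (Pi.single (ja i) 1) := by
  apply psiHom_ext
  · intro j p; rw [psiHom_y]; simp [alphaHom, leftMulHom, yg, cj, Pi.single_apply]
  · intro j; rw [psiHom_x]
    by_cases h : j = i <;> simp [alphaHom, leftMulHom, xg, Pi.single_apply, h]

lemma beta_eq (i : Fin N) : betaHom hk hs i = psiHom (s := s) hk hs (Pi.single (jb i) 1) := by
  apply psiHom_ext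
  · intro j p; rw [psiHom_y]; simp [betaHom, rightMulInvHom, yg, cj, Pi.single_apply]
  · intro j; rw [psiHom_x]
    by_cases h : j = i <;> simp [betaHom, rightMulInvHom, xg, Pi.single_apply, h]

lemma gamma_eq (i : Fin k) :
    gammaHom hk hs i = psiHom (N := N) (s := s) hk hs (Pi.single (jc i) 1) := by
  apply psiHom_ext
  · intro j p; rw [psiHom_y]
    by_cases h : j = i <;> simp [gammaHom, conjBlockHom, yg, cj, Pi.single_apply, h]
  · intro j; rw [psiHom_x]
    simp [gammaHom, conjBlockHom, xg, Pi.single_apply]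

lemma delta_eq (i : Fin k) :
    deltaHom hs i = psiHom (N := N) (s := s) hk hs (Pi.single (jd i) 1) := by
  apply psiHom_ext
  · intro j p; rw [psiHom_y]
    by_cases h : j = i
    · subst h
      simp [deltaHom, conjBlockHom, yg, cj, Pi.single_apply]
    · simp [deltaHom, conjBlockHom, yg, cj, Pi.single_apply, h]
  · intro j; rw [psiHom_x]
    simp [deltaHom, conjBlockHom, xg, Pi.single_apply]

lemma hei_a {q : RBasis k N s} (hq : q ≠ Sum.inl ⟨⟨0, hk⟩, ⟨0, hs _⟩⟩) :
    hei (Sum.inl ⟨⟨0, hk⟩, ⟨0, hs _⟩⟩) q (y11 hk hs) = ⟨1, 0, 0⟩ := by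
  simp [y11, yg, hei_of]

lemma psi_ker (v : PJ k N → ℤ) (hc : v (jc ⟨0, hk⟩) = 0) (hd : v (jd ⟨0, hk⟩) = 0)
    (hd' : ∀ j, s j < 2 → v (jd j) = 0) (g : RF k N s)
    (hg : ∀ x, psiHom hk hs v x = g * x * g⁻¹) :
    ∃ t : ℤ, (∀ i, v (ja i) = t) ∧ (∀ i, v (jb i) = t) ∧ (∀ j, j ≠ ⟨0, hk⟩ → v (jc j) = t) ∧
      (∀ j, v (jd j) = 0) ∧ (2 ≤ s ⟨0, hk⟩ → t = 0) := by
  set a₀ : RBasis k N s := Sum.inl ⟨⟨0, hk⟩, ⟨0, hs _⟩⟩ with ha₀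
  have hz : ∀ (q : RBasis k N s), q ≠ a₀ → (expo q g).toAdd = 0 := by
    intro q hq
    have h := hg (y11 hk hs)
    rw [psiHom_a] at h
    have h := congrArg (fun u => (hei a₀ q u).z) h
    simp only [map_mul, map_inv, Heis.conj_z] at h
    rw [hei_a hk hs hq, hei_y hq.symm] at h
    simpa using h
  refine ⟨(expo a₀ g).toAdd, ?_⟩
  have hxx : ∀ i, v (ja i) = (expo a₀ g).toAdd ∧ v (jb i) = (expo a₀ g).toAdd := by
    intro i
    have h := hg (xg i)
    rw [psiHom_x] at h
    have hq : (Sum.inr i : RBasis k N s) ≠ a₀ := by simp [a₀]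
    have hX : hei a₀ (Sum.inr i) (xg i : RF k N s) = ⟨0, 1, 0⟩ := by
      simp [xg, hei_of, hq]
    have h1 := congrArg (fun u => (hei a₀ (Sum.inr i) u).z) h
    have h2 := congrArg (fun u => (hei a₀ (Sum.inr i) u).x) h
    have hzz : ∀ n : ℤ, ((⟨1, 0, 0⟩ : Heis) ^ n) = ⟨n, 0, 0⟩ := by
      intro n
      have hcom : (⟨1, 0, 0⟩ : Heis) = ⟨1, 0, 0⟩ := rfl
      induction n with
      | zero => rfl
      | succ n ih => rw [zpow_add_one, ih]; ext <;> simp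
      | pred n ih => rw [zpow_sub_one, ih]; ext <;> simp; ring
    simp only [map_mul, map_inv, Heis.conj_z, map_zpow] at h1 h2
    rw [hei_a hk hs hq, hX, hei_x] at h1
    rw [hei_a hk hs hq, hX] at h2
    simp [hzz] at h1 h2
    exact ⟨h1, by omega⟩
  refine ⟨fun i => (hxx i).1, fun i => (hxx i).2, ?_, ?_, ?_⟩
  · intro j hj
    have h := hg (yg j ⟨0, hs j⟩)
    rw [psiHom_y] at h
    have hq : (Sum.inl ⟨j, ⟨0, hs j⟩⟩ : RBasis k N s) ≠ a₀ := by
      intro e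
      simp only [a₀, Sum.inl.injEq, Sigma.mk.injEq] at e
      exact hj e.1
    have hX : hei a₀ (Sum.inl ⟨j, ⟨0, hs j⟩⟩) (yg j ⟨0, hs j⟩ : RF k N s) = ⟨0, 1, 0⟩ := by
      rw [yg, hei_of, if_neg hq, if_pos rfl]
    have h1 := congrArg (fun u => (hei a₀ (Sum.inl ⟨j, ⟨0, hs j⟩⟩) u).z) h
    simp only [map_mul, map_inv, Heis.conj_z, cj, map_zpow] at h1
    rw [hei_a hk hs hq, hX, hei_x] at h1
    simpa [Heis.zpow_x, Heis.zpow_y] using h1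
  · intro j
    by_cases hsj : s j < 2
    · exact hd' j hsj
    by_cases hj : j = ⟨0, hk⟩
    · rw [hj]; exact hd
    have h := hg (yg j ⟨1, by omega⟩)
    rw [psiHom_y] at h
    set p : RBasis k N s := Sum.inl ⟨j, ⟨0, hs j⟩⟩ with hp
    set q : RBasis k N s := Sum.inl ⟨j, ⟨1, by omega⟩⟩ with hq
    have hpa : p ≠ a₀ := by
      intro e
      simp only [a₀, p, Sum.inl.injEq, Sigma.mk.injEq] at e
      exact hj e.1
    have hqa : q ≠ a₀ := by
      intro e
      simp only [a₀, q, Sum.inl.injEq, Sigma.mk.injEq] at e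
      exact hj e.1
    have hqp : q ≠ p := by simp [p, q]
    have hA : hei p q (y11 hk hs) = 1 := by
      rw [y11, yg, hei_of, if_neg hpa.symm, if_neg hqa.symm]
    have hP : hei p q (yg j ⟨0, hs j⟩ : RF k N s) = ⟨1, 0, 0⟩ := by
      rw [yg, hei_of, if_pos rfl]
    have hQ : hei p q (yg j ⟨1, by omega⟩ : RF k N s) = ⟨0, 1, 0⟩ := by
      rw [yg, hei_of, if_neg hqp, if_pos rfl]
    have h1 := congrArg (fun u => (hei p q u).z) h
    simp only [map_mul, map_inv, Heis.conj_z, cj, map_zpow] at h1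
    rw [hA, hP, hQ, hei_x, hz p hpa] at h1
    simpa [Heis.zpow_x, Heis.zpow_y] using h1
  · intro h2
    have h := hg (yg ⟨0, hk⟩ ⟨1, by omega⟩)
    rw [psiHom_y] at h
    set q : RBasis k N s := Sum.inl ⟨⟨0, hk⟩, ⟨1, by omega⟩⟩ with hq
    have hqa : q ≠ a₀ := by simp [a₀, q]
    have hQ : hei a₀ q (yg ⟨0, hk⟩ ⟨1, by omega⟩ : RF k N s) = ⟨0, 1, 0⟩ := by
      rw [yg, hei_of, if_neg hqa, if_pos rfl]
    have h1 := congrArg (fun u => (hei a₀ q u).z) h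
    simp only [map_mul, map_inv, Heis.conj_z, cj, hc, hd, zpow_zero, mul_one, map_one] at h1
    rw [hQ, hei_x] at h1
    simpa using h1.symm

/-- The index set of the generators. -/
def T0 (k N m : ℕ) (hk : 0 < k) : Finset (PJ k N) :=
  Finset.univ.disjSum (Finset.univ.disjSum
    ((Finset.univ.filter fun j => j ≠ ⟨0, hk⟩).disjSum
      (Finset.univ.filter fun j => j ≠ ⟨0, hk⟩ ∧ (j : ℕ) < k - m)))

lemma mem_ja (m : ℕ) (i : Fin N) : (ja i : PJ k N) ∈ T0 k N m hk := by simp [T0]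
lemma mem_jb (m : ℕ) (i : Fin N) : (jb i : PJ k N) ∈ T0 k N m hk := by simp [T0]
lemma mem_jc (m : ℕ) (j : Fin k) : (jc j : PJ k N) ∈ T0 k N m hk ↔ j ≠ ⟨0, hk⟩ := by simp [T0]
lemma mem_jd (m : ℕ) (j : Fin k) : (jd j : PJ k N) ∈ T0 k N m hk ↔
    j ≠ ⟨0, hk⟩ ∧ (j : ℕ) < k - m := by simp [T0]

lemma card_T0 (m : ℕ) : (T0 k N m hk).card = 2 * N + (k - 1) + (k - m - 1) := by
  have h1 : (Finset.univ.filter fun j : Fin k => j ≠ ⟨0, hk⟩).card = k - 1 := by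
    rw [Finset.filter_ne', Finset.card_erase_of_mem (Finset.mem_univ _)]
    simp
  have h2 : (Finset.univ.filter fun j : Fin k => j ≠ ⟨0, hk⟩ ∧ (j : ℕ) < k - m).card
      = k - m - 1 := by
    rw [← Finset.card_map Fin.valEmbedding]
    have : (Finset.univ.filter fun j : Fin k => j ≠ ⟨0, hk⟩ ∧ (j : ℕ) < k - m).map
        Fin.valEmbedding = Finset.Ico 1 (k - m) := by
      ext x
      simp only [Finset.mem_map, Finset.mem_filter, Finset.mem_univ, true_and,
        Fin.valEmbedding_apply, Finset.mem_Ico]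
      constructor
      · rintro ⟨j, ⟨h, h'⟩, rfl⟩
        have : (j : ℕ) ≠ 0 := fun e => h (Fin.ext e)
        omega
      · intro h
        refine ⟨⟨x, by omega⟩, ⟨?_, h.2⟩, rfl⟩
        intro e
        have := congrArg Fin.val e
        simp at this
        omega
    rw [this, Nat.card_Ico]
  simp only [T0, Finset.card_disjSum, h1, h2, Finset.card_univ, Fintype.card_fin]
  omega

end Psi

/-- The images in `Out(F_n)` of `α_i, β_i (i ≤ N = n - ∑ s j), γ_j (1 < j ≤ k),
δ_r (1 < r ≤ k - m)` generate a free abelian subgroup of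
`Out(F_n; A_1, …, A_k)` of rank `2(n - ∑ s j) + 2k - 2 - m`, where
`s j ≥ 2` for `j ≤ k - m` and `s j = 1` for the last `m` indices. -/
theorem stmt_7 (k N m : ℕ) (hk : 0 < k) (s : Fin k → ℕ) (hm : m ≤ k)
    (hs : ∀ j, 0 < s j)
    (hbig : ∀ j : Fin k, (j : ℕ) < k - m → 2 ≤ s j)
    (hone : ∀ j : Fin k, k - m ≤ (j : ℕ) → s j = 1)
    (Aα Aβ : Fin N → MulAut (RF k N s)) (Aγ Aδ : Fin k → MulAut (RF k N s))
    (hAα : ∀ i, (Aα i : RF k N s → RF k N s) = alphaHom hk hs i)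
    (hAβ : ∀ i, (Aβ i : RF k N s → RF k N s) = betaHom hk hs i)
    (hAγ : ∀ j, (Aγ j : RF k N s → RF k N s) = gammaHom hk hs j)
    (hAδ : ∀ j, (Aδ j : RF k N s → RF k N s) = deltaHom hs j) :
    let π := QuotientGroup.mk' (innAut (RF k N s))
    let S : Set (MulAut (RF k N s) ⧸ innAut (RF k N s)) :=
      Set.range (fun i => π (Aα i)) ∪ Set.range (fun i => π (Aβ i)) ∪
        (fun j => π (Aγ j)) '' {j | j ≠ ⟨0, hk⟩} ∪
        (fun j => π (Aδ j)) '' {j | j ≠ ⟨0, hk⟩ ∧ (j : ℕ) < k - m}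
    Subgroup.closure S ≤
        Subgroup.map π (relAut fun j : Fin k => factor (N := N) j) ∧
      Nonempty (↥(Subgroup.closure S) ≃*
        Multiplicative (Fin (2 * N + 2 * k - 2 - m) → ℤ)) := by
  intro π S
  let Φ : Multiplicative (PJ k N → ℤ) →* (MulAut (RF k N s) ⧸ innAut (RF k N s)) :=
    π.comp (psi hk hs)
  have eα : ∀ i, Aα i = psi hk hs (Multiplicative.ofAdd (Pi.single (ja i) 1)) := by
    intro i; ext x; rw [psi_apply, ← alpha_eq, ← hAα]
  have eβ : ∀ i, Aβ i = psi hk hs (Multiplicative.ofAdd (Pi.single (jb i) 1)) := by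
    intro i; ext x; rw [psi_apply, ← beta_eq, ← hAβ]
  have eγ : ∀ i, Aγ i = psi hk hs (Multiplicative.ofAdd (Pi.single (jc i) 1)) := by
    intro i; ext x; rw [psi_apply, ← gamma_eq, ← hAγ]
  have eδ : ∀ i, Aδ i = psi hk hs (Multiplicative.ofAdd (Pi.single (jd i) 1)) := by
    intro i; ext x; rw [psi_apply, ← delta_eq, ← hAδ]
  have hS : S = (fun j => Φ (Multiplicative.ofAdd (Pi.single j (1 : ℤ)))) ''
      (T0 k N m hk : Set (PJ k N)) := by
    ext x
    constructor
    · rintro (((⟨i, rfl⟩ | ⟨i, rfl⟩) | ⟨j, hj, rfl⟩) | ⟨j, hj, rfl⟩)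
      · exact ⟨ja i, mem_ja hk m i, by simp only [eα]; rfl⟩
      · exact ⟨jb i, mem_jb hk m i, by simp only [eβ]; rfl⟩
      · exact ⟨jc j, (mem_jc hk m j).2 hj, by simp only [eγ]; rfl⟩
      · exact ⟨jd j, (mem_jd hk m j).2 hj, by simp only [eδ]; rfl⟩
    · rintro ⟨i | i | j | j, hj, rfl⟩
      · exact Or.inl (Or.inl (Or.inl ⟨i, by simp only [eα]; rfl⟩))
      · exact Or.inl (Or.inl (Or.inr ⟨i, by simp only [eβ]; rfl⟩))
      · exact Or.inl (Or.inr ⟨j, (mem_jc hk m j).1 hj, by simp only [eγ]; rfl⟩)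
      · exact Or.inr ⟨j, (mem_jd hk m j).1 hj, by simp only [eδ]; rfl⟩
  have hker : ∀ v : PJ k N → ℤ, (∀ j, j ∉ T0 k N m hk → v j = 0) →
      Φ (Multiplicative.ofAdd v) = 1 →
      ∃ t : ℤ, (∀ i, v (ja i) = t) ∧ (∀ i, v (jb i) = t) ∧ (∀ j, j ≠ ⟨0, hk⟩ → v (jc j) = t) ∧
      (∀ j, v (jd j) = 0) ∧ (2 ≤ s ⟨0, hk⟩ → t = 0) := by
    intro v hv h1
    have h2 : psi hk hs (Multiplicative.ofAdd v) ∈ innAut (RF k N s) :=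
      (QuotientGroup.eq_one_iff _).1 h1
    obtain ⟨g, hg⟩ := h2
    refine psi_ker hk hs v (hv _ (by simp [mem_jc])) (hv _ (by simp [mem_jd])) ?_ g ?_
    · intro j hj
      apply hv
      rw [mem_jd]
      rintro ⟨_, h⟩
      have := hbig j h
      omega
    · intro x
      rw [← psi_apply, ← hg, MulAut.conj_apply]
  refine ⟨?_, ?_⟩
  · rw [hS, Subgroup.closure_le]
    rintro _ ⟨j, _, rfl⟩
    exact ⟨_, psi_relAut hk hs _, rfl⟩
  rw [hS]
  have hcard := card_T0 (N := N) hk m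
  by_cases hmk : m < k
  · refine generic Φ _ _ (by omega) ?_
    intro v hv h1
    obtain ⟨t, h⟩ := hker v hv h1
    have ht := h.2.2.2.2 (hbig _ (by simp; omega))
    subst ht
    funext j
    rcases j with i | i | j | j
    · exact h.1 i
    · exact h.2.1 i
    · by_cases hj : j = ⟨0, hk⟩
      · exact hv _ (by simp [mem_jc, hj])
      · exact h.2.2.1 j hj
    · exact h.2.2.2.1 j
  have hmk' : m = k := by omega
  subst hmk'
  rcases (T0 m N m hk).eq_empty_or_nonempty with he | ⟨i₀, hi₀⟩
  · refine generic Φ _ _ (by rw [he] at hcard ⊢; simp at hcard ⊢; omega) ?_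
    intro v hv h1
    funext j
    exact hv j (by simp [he])
  rw [generic_erase Φ _ i₀]
  · refine generic Φ _ _ (by rw [Finset.card_erase_of_mem hi₀]; omega) ?_
    intro v hv h1
    obtain ⟨t, h⟩ := hker v (fun j hj => hv j (fun h => hj (Finset.mem_of_mem_erase h))) h1
    have hv0 : v i₀ = 0 := hv i₀ (by simp)
    have ht : t = 0 := by
      rcases i₀ with i | i | j | j
      · rw [← h.1 i]; exact hv0
      · rw [← h.2.1 i]; exact hv0
      · rw [← h.2.2.1 j ((mem_jc hk m j).1 hi₀)]; exact hv0
      · have := ((mem_jd hk m j).1 hi₀).2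
        omega
    subst ht
    funext j
    rcases j with i | i | j | j
    · exact h.1 i
    · exact h.2.1 i
    · by_cases hj : j = ⟨0, hk⟩
      · exact hv _ (by simp [mem_jc, hj])
      · exact h.2.2.1 j hj
    · exact h.2.2.2.1 j
  · have hsum : ∀ j, (∑ j ∈ T0 m N m hk, Pi.single j (1 : ℤ) : PJ m N → ℤ) j =
        if j ∈ T0 m N m hk then 1 else 0 := by
      intro j
      simp [Finset.sum_apply, Pi.single_apply]
    generalize (∑ j ∈ T0 m N m hk, Pi.single j (1 : ℤ) : PJ m N → ℤ) = v at hsum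
    refine (QuotientGroup.eq_one_iff _).2 ⟨y11 hk hs, ?_⟩
    have hh : (MulAut.conj (y11 hk hs : RF m N s)).toMonoidHom = psiHom hk hs v := by
      apply psiHom_ext
      · intro j p
        rw [psiHom_y, cj, hsum, hsum]
        by_cases hj : j = ⟨0, hk⟩
        · subst hj
          have hp : p = ⟨0, hs _⟩ := by
            have := hone ⟨0, hk⟩ (by simp)
            apply Fin.ext
            have := p.2
            simp; omega
          subst hp
          simp [mem_jc, mem_jd, y11]
        · simp [mem_jc, mem_jd, hj]
      · intro i
        rw [psiHom_x, hsum, hsum]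
        simp [mem_ja, mem_jb]
    ext x
    exact DFunLike.congr_fun hh x
end

section
/- In the free group F = ⟨y_1, …, y_s⟩ with s ≥ 2, the elements y_1, …, y_s together with the products y_i y_l and y_i y_l^{-1} for all i < l determine the lengths: if a point of (unprojectivized) outer space for F is a metric rose on which every y_i has translation length 1 and every y_i y_l and y_i y_l^{-1} (i < l) has translation length 2, then every petal has length 1 (the rose is the standard unit rose up to isometry). -/
/-- The length of (the reduced word of) `g` in a metric rose for the free group
`F_s` whose petals have lengths `l 1, …, l s`. -/
noncomputable def roseWordLength {S : ℕ} (l : Fin S → ℝ) (g : FreeGroup (Fin S)) : ℝ :=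
  ((FreeGroup.toWord g).map fun p => l p.1).sum

/-- The translation length of `g` on the metric rose with petal lengths `l`:
the infimum of the lengths of the conjugates of `g` (the length of the
cyclically reduced representative of the conjugacy class of `g`). -/
noncomputable def roseTransLength {S : ℕ} (l : Fin S → ℝ) (g : FreeGroup (Fin S)) : ℝ :=
  sInf (Set.range fun h : FreeGroup (Fin S) => roseWordLength l (h * g * h⁻¹))

namespace RoseAux

open FreeGroup

variable {S : ℕ} {l : Fin S → ℝ}

/-- No cancellation in the product `a * b`. -/
def NC (a b : FreeGroup (Fin S)) : Prop :=
  ∀ x ∈ a.toWord.getLast?, ∀ y ∈ b.toWord.head?, x.1 = y.1 → x.2 = y.2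

theorem flip_eq {a b : Fin S × Bool} (h : a.1 = b.1) (h' : a.2 ≠ b.2) : a = (b.1, !b.2) := by
  rcases a with ⟨i, _ | _⟩ <;> rcases b with ⟨j, _ | _⟩ <;> simp_all

theorem toWord_mul_of_NC {a b : FreeGroup (Fin S)} (h : NC a b) :
    (a * b).toWord = a.toWord ++ b.toWord := by
  rw [toWord_mul]
  apply IsReduced.reduce_eq
  exact List.IsChain.append isReduced_toWord isReduced_toWord h

theorem NC_of_toWord {a b : FreeGroup (Fin S)}
    (h : (a * b).toWord = a.toWord ++ b.toWord) : NC a b := by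
  have h1 : IsReduced (a.toWord ++ b.toWord) := h ▸ isReduced_toWord
  exact (List.isChain_append.1 h1).2.2

theorem wsum_nonneg (hl : ∀ i, 0 < l i) (L : List (Fin S × Bool)) :
    0 ≤ (L.map fun p => l p.1).sum := by
  apply List.sum_nonneg
  intro x hx
  obtain ⟨p, -, rfl⟩ := List.mem_map.1 hx
  exact (hl _).le

theorem wsum_sublist (hl : ∀ i, 0 < l i) {L M : List (Fin S × Bool)} (h : L.Sublist M) :
    (L.map fun p => l p.1).sum ≤ (M.map fun p => l p.1).sum := by
  induction h with
  | slnil => simp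
  | cons a h ih => simp only [List.map_cons, List.sum_cons]; linarith [hl a.1]
  | cons_cons a h ih => simp only [List.map_cons, List.sum_cons]; linarith

theorem wsum_sublist_eq (hl : ∀ i, 0 < l i) {L M : List (Fin S × Bool)} (h : L.Sublist M)
    (h' : (M.map fun p => l p.1).sum ≤ (L.map fun p => l p.1).sum) : L = M := by
  induction h with
  | slnil => rfl
  | cons a h ih =>
    simp only [List.map_cons, List.sum_cons] at h'
    linarith [hl a.1, wsum_sublist hl h]
  | cons_cons a h ih =>
    simp only [List.map_cons, List.sum_cons] at h'
    rw [ih (by linarith)]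

theorem wl_nonneg (hl : ∀ i, 0 < l i) (g : FreeGroup (Fin S)) : 0 ≤ roseWordLength l g :=
  wsum_nonneg hl _

theorem wl_mul_le (hl : ∀ i, 0 < l i) (a b : FreeGroup (Fin S)) :
    roseWordLength l (a * b) ≤ roseWordLength l a + roseWordLength l b := by
  unfold roseWordLength
  have := wsum_sublist hl (toWord_mul_sublist a b)
  simpa using this

theorem wl_mul_of_NC {a b : FreeGroup (Fin S)} (h : NC a b) :
    roseWordLength l (a * b) = roseWordLength l a + roseWordLength l b := by
  simp [roseWordLength, toWord_mul_of_NC h]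

theorem NC_of_wl (hl : ∀ i, 0 < l i) {a b : FreeGroup (Fin S)}
    (h : roseWordLength l a + roseWordLength l b ≤ roseWordLength l (a * b)) : NC a b := by
  apply NC_of_toWord
  apply wsum_sublist_eq hl (toWord_mul_sublist a b)
  simpa [roseWordLength] using h

theorem wl_inv (g : FreeGroup (Fin S)) : roseWordLength l g⁻¹ = roseWordLength l g := by
  simp [roseWordLength, toWord_inv, invRev, List.sum_reverse, Function.comp_def]

theorem bdd (hl : ∀ i, 0 < l i) (g : FreeGroup (Fin S)) :
    BddBelow (Set.range fun h : FreeGroup (Fin S) => roseWordLength l (h * g * h⁻¹)) :=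
  ⟨0, by rintro _ ⟨h, rfl⟩; exact wl_nonneg hl _⟩

theorem T_le (hl : ∀ i, 0 < l i) (g : FreeGroup (Fin S)) :
    roseTransLength l g ≤ roseWordLength l g :=
  csInf_le (bdd hl g) ⟨1, by simp⟩

theorem T_conj (g k : FreeGroup (Fin S)) :
    roseTransLength l (k * g * k⁻¹) = roseTransLength l g := by
  unfold roseTransLength
  congr 1
  ext x
  constructor
  · rintro ⟨h, rfl⟩
    exact ⟨h * k, by simp only []; congr 1; group⟩
  · rintro ⟨h, rfl⟩
    exact ⟨h * k⁻¹, by simp only []; congr 1; group⟩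

theorem T_comm (a b : FreeGroup (Fin S)) :
    roseTransLength l (a * b) = roseTransLength l (b * a) := by
  rw [← T_conj (b * a) a]
  congr 1
  group

theorem T_inv (g : FreeGroup (Fin S)) :
    roseTransLength l g⁻¹ = roseTransLength l g := by
  unfold roseTransLength
  congr 1
  ext x
  have : ∀ h : FreeGroup (Fin S), roseWordLength l (h * g⁻¹ * h⁻¹)
      = roseWordLength l (h * g * h⁻¹) := by
    intro h
    rw [← wl_inv (h * g * h⁻¹)]
    congr 1
    group
  simp only [Set.mem_range, this]

theorem wl_pow_le (hl : ∀ i, 0 < l i) (g : FreeGroup (Fin S)) (n : ℕ) :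
    roseWordLength l (g ^ n) ≤ n * roseWordLength l g := by
  induction n with
  | zero => simp [roseWordLength]
  | succ n ih =>
    rw [pow_succ]
    push_cast
    linarith [wl_mul_le hl (g ^ n) g]

theorem wl_pow_of_NC {g : FreeGroup (Fin S)} (h : NC g g) (n : ℕ) :
    roseWordLength l (g ^ n) = n * roseWordLength l g := by
  have hc : IsCyclicallyReduced g.toWord := ⟨isReduced_toWord, h⟩
  simp only [roseWordLength, toWord_pow, (hc.flatten_replicate n).isReduced.reduce_eq]
  clear h hc
  induction n with
  | zero => simp
  | succ n ih =>
    rw [List.replicate_succ, List.flatten_cons, List.map_append, List.sum_append, ih]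
    push_cast
    ring

theorem T_eq (hl : ∀ i, 0 < l i) {g : FreeGroup (Fin S)} (h : NC g g) :
    roseTransLength l g = roseWordLength l g := by
  apply le_antisymm (T_le hl g)
  apply le_csInf (Set.range_nonempty _)
  rintro _ ⟨k, rfl⟩
  simp only []
  by_contra! hlt
  obtain ⟨n, hn⟩ := exists_nat_gt (2 * roseWordLength l k /
    (roseWordLength l g - roseWordLength l (k * g * k⁻¹)))
  rw [div_lt_iff₀ (by linarith)] at hn
  have h1 := wl_pow_of_NC (l := l) h n
  have h2 := wl_pow_le hl (k * g * k⁻¹) n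
  rw [conj_pow] at h2
  have h3 := wl_mul_le hl (k⁻¹ * (k * g ^ n * k⁻¹)) k
  have h4 := wl_mul_le hl k⁻¹ (k * g ^ n * k⁻¹)
  rw [wl_inv] at h4
  have h5 : k⁻¹ * (k * g ^ n * k⁻¹) * k = g ^ n := by group
  rw [h5] at h3
  nlinarith

theorem conj_head {x : Fin S × Bool} {u : FreeGroup (Fin S)} (h : x ∈ u.toWord.head?) :
    norm ((mk [x])⁻¹ * u * mk [x]) ≤ norm u := by
  obtain ⟨w, hw⟩ : ∃ w, u.toWord = x :: w := by
    cases hu : u.toWord with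
    | nil => simp [hu] at h
    | cons a w => simp [hu] at h; exact ⟨w, by rw [h]⟩
  have hu : u = mk [x] * mk w := by rw [mul_mk, ← mk_toWord (x := u), hw]; rfl
  have h1 : (mk [x])⁻¹ * u * mk [x] = mk (w ++ [x]) := by
    rw [← mul_mk]; nth_rw 1 [hu]; group
  rw [h1]
  refine norm_mk_le.trans ?_
  simp [FreeGroup.norm, hw]

theorem conj_last {x : Fin S × Bool} {u : FreeGroup (Fin S)}
    (h : (x.1, !x.2) ∈ u.toWord.getLast?) :
    norm ((mk [x])⁻¹ * u * mk [x]) ≤ norm u := by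
  rw [← norm_inv_eq, ← norm_inv_eq (x := u)]
  have h1 : ((mk [x])⁻¹ * u * mk [x])⁻¹ = (mk [x])⁻¹ * u⁻¹ * mk [x] := by group
  rw [h1]
  apply conj_head
  rw [toWord_inv]
  simp only [Option.mem_def] at h
  simp [invRev, h]

theorem conj_both {x : Fin S × Bool} {u : FreeGroup (Fin S)}
    (h : x ∈ u.toWord.head?) (h' : (x.1, !x.2) ∈ u.toWord.getLast?) :
    norm ((mk [x])⁻¹ * u * mk [x]) < norm u ∧ ∃ g, u = mk [x] * g * (mk [x])⁻¹ ∧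
      g.norm < u.norm ∧ u.toWord = x :: (g.toWord ++ [(x.1, !x.2)]) := by
  obtain ⟨w, hw⟩ : ∃ w, u.toWord = x :: (w ++ [(x.1, !x.2)]) := by
    cases hu : u.toWord with
    | nil => simp [hu] at h
    | cons a w =>
      simp [hu] at h
      subst h
      rcases List.eq_nil_or_concat w with rfl | ⟨w', b, rfl⟩
      · rw [hu] at h'
        simp [Prod.ext_iff] at h'
      · rw [hu] at h'
        rw [List.concat_eq_append, ← List.cons_append, List.getLast?_concat] at h'
        simp at h'
        exact ⟨w', by simp [h']⟩
  have hinv : (mk [x])⁻¹ = mk [(x.1, !x.2)] := by rw [inv_mk]; rfl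
  have hu : u = mk [x] * mk w * (mk [x])⁻¹ := by
    rw [hinv, mul_mk, mul_mk, ← mk_toWord (x := u), hw]; rfl
  have h1 : (mk [x])⁻¹ * u * mk [x] = mk w := by rw [hu]; group
  have hr : IsReduced w := by
    have : IsReduced u.toWord := isReduced_toWord
    rw [hw] at this
    exact this.infix ⟨[x], [(x.1, !x.2)], by simp⟩
  have hlt : norm (mk w) < norm u := by
    refine lt_of_le_of_lt norm_mk_le ?_
    simp [FreeGroup.norm, hw]
  refine ⟨h1 ▸ hlt, mk w, hu, hlt, ?_⟩
  rw [toWord_mk, hr.reduce_eq, hw]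

/-- Disjoint axes: contradiction. -/
theorem disjoint_axes (hl : ∀ i, 0 < l i) {x : Fin S × Bool} {u v : FreeGroup (Fin S)}
    (h : x ∈ u.toWord.head?) (h' : (x.1, !x.2) ∈ u.toWord.getLast?)
    (hv : x ∉ v.toWord.head?) (hv' : (x.1, !x.2) ∉ v.toWord.getLast?) (hv1 : v ≠ 1) :
    roseTransLength l u + roseTransLength l v < roseTransLength l (u * v) := by
  have hu1 : u.toWord ≠ [] := by rintro h0; simp [h0] at h
  have hv0 : v.toWord ≠ [] := by simpa [toWord_eq_nil_iff] using hv1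
  have n1 : NC u v := by
    intro a ha b hb hab
    have : a = (x.1, !x.2) := by
      simp only [Option.mem_def] at ha h'
      rw [h'] at ha; simpa using ha.symm
    subst this
    by_contra hne
    apply hv
    have : b = x := by
      have := flip_eq hab.symm (Ne.symm hne)
      simpa using this
    exact this ▸ hb
  have n2 : NC (u * v) (u * v) := by
    intro a ha b hb hab
    rw [toWord_mul_of_NC n1] at ha hb
    rw [List.getLast?_append_of_ne_nil _ hv0] at ha
    rw [List.head?_append_of_ne_nil _ hu1] at hb
    have : b = x := by
      simp only [Option.mem_def] at hb h
      rw [h] at hb; simpa using hb.symm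
    subst this
    by_contra hne
    apply hv'
    have : a = (b.1, !b.2) := flip_eq hab hne
    exact this ▸ ha
  rw [T_eq hl n2, wl_mul_of_NC n1]
  obtain ⟨-, g, hg, -, hw⟩ := conj_both h h'
  have e1 : roseTransLength l u ≤ roseWordLength l g := by
    rw [hg, T_conj]; exact T_le hl g
  have e2 : roseWordLength l u = l x.1 + (roseWordLength l g + l x.1) := by
    simp [roseWordLength, hw]
  linarith [T_le hl v, hl x.1]

theorem exists_reduced (hl : ∀ i, 0 < l i) (u : Fin S → FreeGroup (Fin S))
    (h1 : ∀ i, roseTransLength l (u i) = 1)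
    (h2 : ∀ i j, i ≠ j → roseTransLength l (u i * u j) = 2) :
    ∃ h : FreeGroup (Fin S), ∀ i, NC (h * u i * h⁻¹) (h * u i * h⁻¹) := by
  let f : FreeGroup (Fin S) → ℕ := fun h => ∑ i, norm (h * u i * h⁻¹)
  obtain ⟨h, hmin⟩ : ∃ h, ∀ k, f h ≤ f k :=
    ⟨Function.argmin f, fun k => Function.argmin_le f k⟩
  refine ⟨h, fun i => ?_⟩
  by_contra hnc
  obtain ⟨x, hx, hx'⟩ : ∃ x, x ∈ (h * u i * h⁻¹).toWord.head? ∧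
      (x.1, !x.2) ∈ (h * u i * h⁻¹).toWord.getLast? := by
    unfold NC at hnc
    push Not at hnc
    obtain ⟨a, ha, b, hb, hab, hne⟩ := hnc
    refine ⟨b, hb, ?_⟩
    have : a = (b.1, !b.2) := flip_eq hab hne
    exact this ▸ ha
  obtain ⟨j, hj, hj'⟩ : ∃ j, x ∉ (h * u j * h⁻¹).toWord.head? ∧
      (x.1, !x.2) ∉ (h * u j * h⁻¹).toWord.getLast? := by
    by_contra! hall
    have hlt : f ((mk [x])⁻¹ * h) < f h := by
      have he : ∀ k, (mk [x])⁻¹ * h * u k * ((mk [x])⁻¹ * h)⁻¹ =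
          (mk [x])⁻¹ * (h * u k * h⁻¹) * mk [x] := by intro k; group
      simp only [f, he]
      apply Finset.sum_lt_sum
      · intro k _
        by_cases hk : x ∈ (h * u k * h⁻¹).toWord.head?
        · exact conj_head hk
        · exact conj_last (hall k hk)
      · exact ⟨i, Finset.mem_univ _, (conj_both hx hx').1⟩
    exact absurd (hmin _) (not_le.2 hlt)
  have hij : i ≠ j := by rintro rfl; exact hj hx
  have hne : h * u j * h⁻¹ ≠ 1 := by
    intro h0
    have := h1 j
    rw [← T_conj (u j) h, h0] at this
    have h3 := T_le hl (1 : FreeGroup (Fin S))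
    simp [roseWordLength] at h3
    linarith
  have := disjoint_axes hl hx hx' hj hj' hne
  have e : h * u i * h⁻¹ * (h * u j * h⁻¹) = h * (u i * u j) * h⁻¹ := by group
  rw [e, T_conj, T_conj, T_conj, h1, h1, h2 i j hij] at this
  norm_num at this

theorem toWord_prod (L : List (FreeGroup (Fin S))) (h0 : ∀ g ∈ L, g ≠ 1)
    (h : L.IsChain NC) : L.prod.toWord = (L.map toWord).flatten := by
  have hr : IsReduced (L.map toWord).flatten := by
    unfold FreeGroup.IsReduced
    rw [List.isChain_flatten]
    · constructor
      · intro w hw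
        obtain ⟨g, -, rfl⟩ := List.mem_map.1 hw
        exact isReduced_toWord
      · rw [List.isChain_map]
        exact h
    · intro hm
      obtain ⟨g, hg, hg'⟩ := List.mem_map.1 hm
      exact h0 g hg (toWord_eq_nil_iff.1 hg')
  have hp : L.prod = mk (L.map toWord).flatten := by
    clear hr h h0
    induction L with
    | nil => rfl
    | cons a L ih =>
      rw [List.prod_cons, ih, List.map_cons, List.flatten_cons, ← mul_mk, mk_toWord]
  rw [hp, toWord_mk, hr.reduce_eq]

end RoseAux

open RoseAux in
/-- If a marked metric rose for `F_s = ⟨y_1, …, y_s⟩` (`s ≥ 2`), with marking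
automorphism `φ` and positive petal lengths `l`, satisfies that every `y_i` has
translation length `1` and every `y_i y_j` and `y_i y_j⁻¹` (`i < j`) has
translation length `2`, then every petal has length `1`. -/
theorem stmt_15 (S : ℕ) (hS : 2 ≤ S) (l : Fin S → ℝ) (hl : ∀ i, 0 < l i)
    (φ : MulAut (FreeGroup (Fin S)))
    (h1 : ∀ i, roseTransLength l (φ (FreeGroup.of i)) = 1)
    (h2 : ∀ i j : Fin S, i < j →
      roseTransLength l (φ (FreeGroup.of i * FreeGroup.of j)) = 2 ∧
      roseTransLength l (φ (FreeGroup.of i * (FreeGroup.of j)⁻¹)) = 2) :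
    ∀ i, l i = 1 := by
  classical
  have g2 : ∀ i j, i ≠ j → roseTransLength l (φ (FreeGroup.of i) * φ (FreeGroup.of j)) = 2 := by
    intro i j hij
    rcases lt_or_gt_of_ne hij with h | h
    · rw [← map_mul]; exact (h2 i j h).1
    · rw [T_comm, ← map_mul]; exact (h2 j i h).1
  have g3 : ∀ i j, i ≠ j →
      roseTransLength l (φ (FreeGroup.of i) * (φ (FreeGroup.of j))⁻¹) = 2 := by
    intro i j hij
    rcases lt_or_gt_of_ne hij with h | h
    · rw [← map_inv, ← map_mul]; exact (h2 i j h).2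
    · rw [← T_inv, mul_inv_rev, inv_inv, ← map_inv, ← map_mul]; exact (h2 j i h).2
  obtain ⟨h, hh⟩ := exists_reduced hl (fun i => φ (FreeGroup.of i)) h1 g2
  set v : Fin S → FreeGroup (Fin S) := fun i => h * φ (FreeGroup.of i) * h⁻¹ with hv
  have k1 : ∀ i, roseWordLength l (v i) = 1 := by
    intro i
    rw [← T_eq hl (hh i), T_conj, h1]
  have k2 : ∀ i j, i ≠ j → roseTransLength l (v i * v j) = 2 := by
    intro i j hij
    have e : v i * v j = h * (φ (FreeGroup.of i) * φ (FreeGroup.of j)) * h⁻¹ := by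
      simp only [hv]; group
    rw [e, T_conj, g2 i j hij]
  have k3 : ∀ i j, i ≠ j → roseTransLength l (v i * (v j)⁻¹) = 2 := by
    intro i j hij
    have e : v i * (v j)⁻¹ = h * (φ (FreeGroup.of i) * (φ (FreeGroup.of j))⁻¹) * h⁻¹ := by
      simp only [hv]; group
    rw [e, T_conj, g3 i j hij]
  let e : Fin S × Bool → FreeGroup (Fin S) := fun p => cond p.2 (v p.1) (v p.1)⁻¹
  have e1 : ∀ p, roseWordLength l (e p) = 1 := by
    rintro ⟨i, _ | _⟩
    · exact (wl_inv _).trans (k1 i)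
    · exact k1 i
  have e0 : ∀ p, e p ≠ 1 := by
    intro p hp
    have := e1 p
    rw [hp] at this
    simp [roseWordLength] at this
  have e2 : ∀ p q : Fin S × Bool, (p.1 = q.1 → p.2 = q.2) → NC (e p) (e q) := by
    rintro ⟨i, b⟩ ⟨j, c⟩ hpq
    by_cases hij : i = j
    · subst hij
      obtain rfl : b = c := hpq rfl
      cases b
      · apply NC_of_wl hl
        rw [e1]
        have : e (i, false) * e (i, false) = (v i * v i)⁻¹ := by
          simp [e]
        rw [this, wl_inv, wl_mul_of_NC (hh i), k1]
      · exact hh i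
    · apply NC_of_wl hl
      rw [e1, e1]
      refine le_trans (le_of_eq ?_) (T_le hl _)
      cases b <;> cases c
      · have : e (i, false) * e (j, false) = (v j * v i)⁻¹ := by simp [e]
        rw [this, T_inv, k2 j i (Ne.symm hij)]; norm_num
      · have : e (i, false) * e (j, true) = (v i)⁻¹ * v j := by simp [e]
        rw [this, T_comm, k3 j i (Ne.symm hij)]; norm_num
      · have : e (i, true) * e (j, false) = v i * (v j)⁻¹ := by simp [e]
        rw [this, k3 i j hij]; norm_num
      · have : e (i, true) * e (j, true) = v i * v j := by simp [e]
        rw [this, k2 i j hij]; norm_num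
  intro k
  obtain ⟨w, hw⟩ : ∃ w, FreeGroup.lift v w = FreeGroup.of k := by
    have hc : FreeGroup.lift v = (MulAut.conj h).toMonoidHom.comp φ.toMonoidHom := by
      ext i
      simp [hv]
    obtain ⟨w, hw⟩ := φ.surjective (h⁻¹ * FreeGroup.of k * h)
    refine ⟨w, ?_⟩
    rw [hc]
    change h * φ w * h⁻¹ = _
    rw [hw]
    group
  have hprod : (w.toWord.map e).prod = FreeGroup.of k := by
    rw [← hw, ← FreeGroup.mk_toWord (x := w), FreeGroup.lift_mk, FreeGroup.mk_toWord]
  have hflat := toWord_prod (w.toWord.map e)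
    (by intro g hg; obtain ⟨p, -, rfl⟩ := List.mem_map.1 hg; exact e0 p)
    (by
      rw [List.isChain_map]
      exact List.IsChain.imp (fun p q hpq => e2 p q hpq) FreeGroup.isReduced_toWord)
  rw [hprod, FreeGroup.toWord_of] at hflat
  have hne : ∀ p, (e p).toWord ≠ [] := fun p hp => e0 p (FreeGroup.toWord_eq_nil_iff.1 hp)
  match hww : w.toWord with
  | [] => simp [hww] at hflat
  | [p] =>
    rw [hww] at hflat
    have h3 := e1 p
    simp only [List.map_cons, List.map_nil, List.flatten_cons, List.flatten_nil,
      List.append_nil] at hflat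
    simpa [roseWordLength, ← hflat] using h3
  | p :: q :: r =>
    rw [hww] at hflat
    have h3 := congrArg List.length hflat
    have h4 := List.length_pos_iff.2 (hne p)
    have h5 := List.length_pos_iff.2 (hne q)
    simp at h3
    omega
end
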